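/- arXiv:1804.01589 — 4 statements merged into one kernel-verified Lean document; each statement's English description precedes it below -/
import Mathlib

section
/- Let G be an abelian group and U a G-graded simple algebra such that M(U) satisfies an ordinary polynomial identity, and let F denote the field Γ(U)_e. For any field extension F̃ of F, the algebra Ũ = F̃ ⊗_F U (with grading Ũ_g = F̃ ⊗_F U_g) is a G-graded simple F̃-algebra, M(Ũ) satisfies an ordinary polynomial identity, F̃ ⊗_F M(U) is isomorphic to M(Ũ) as a G-graded algebra, and the center of M(Ũ) is isomorphic as a G-graded algebra to F̃ ⊗_F Γ(U). -/
noncomputable section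

variable (K : Type*) [Field K]
variable {G : Type*} [CommGroup G] [DecidableEq G]
variable {A : Type*} [NonUnitalNonAssocSemiring A] [Module K A]
  [SMulCommClass K A A] [IsScalarTower K A A]

/-- `𝒜` is a `G`-grading of the (not necessarily associative or unital) algebra `A`. -/
def IsAlgGrading (𝒜 : G → Submodule K A) : Prop :=
  DirectSum.IsInternal 𝒜 ∧ ∀ (g h : G), ∀ a ∈ 𝒜 g, ∀ b ∈ 𝒜 h, a * b ∈ 𝒜 (g * h)

/-- A submodule is homogeneous if it is the sum of its intersections with the components. -/
def IsHomogSubmodule (𝒜 : G → Submodule K A) (I : Submodule K A) : Prop :=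
  I = ⨆ g, I ⊓ 𝒜 g

/-- two-sided ideal of a nonassociative algebra -/
def IsMulIdeal (I : Submodule K A) : Prop :=
  ∀ a : A, ∀ x ∈ I, a * x ∈ I ∧ x * a ∈ I

/-- graded simple: `A·A ≠ 0` and no nontrivial homogeneous ideals. -/
def IsGradedSimple (𝒜 : G → Submodule K A) : Prop :=
  (∃ a b : A, a * b ≠ 0) ∧
    ∀ I : Submodule K A, IsMulIdeal K I → IsHomogSubmodule K 𝒜 I → I = ⊥ ∨ I = ⊤

/-- The multiplication algebra: the subalgebra of `End_K A` generated by left and right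
multiplications. -/
def MultAlg : NonUnitalSubalgebra K (Module.End K A) :=
  NonUnitalAlgebra.adjoin K
    (Set.range (LinearMap.mulLeft K (A := A)) ∪ Set.range (LinearMap.mulRight K (A := A)))

/-- The homogeneous component of degree `h` of `End_K A`: maps sending `𝒜 g` into `𝒜 (h*g)`. -/
def endGrading (𝒜 : G → Submodule K A) (h : G) : Submodule K (Module.End K A) where
  carrier := {φ | ∀ g : G, ∀ x ∈ 𝒜 g, φ x ∈ 𝒜 (h * g)}
  add_mem' := fun hf hg g x hx => (𝒜 _).add_mem (hf g x hx) (hg g x hx)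
  zero_mem' := fun g x hx => (𝒜 _).zero_mem
  smul_mem' := fun c f hf g x hx => (𝒜 _).smul_mem c (hf g x hx)

/-- The centroid of `A`: endomorphisms commuting with all left and right multiplications. -/
def centroid : Submodule K (Module.End K A) where
  carrier := {φ | ∀ a x : A, φ (a * x) = a * φ x ∧ φ (x * a) = φ x * a}
  add_mem' := by
    intro f g hf hg a x
    refine ⟨?_, ?_⟩ <;>
      simp [LinearMap.add_apply, (hf a x).1, (hg a x).1, (hf a x).2, (hg a x).2, mul_add, add_mul]
  zero_mem' := by intro a x; simp
  smul_mem' := by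
    intro c f hf a x
    refine ⟨?_, ?_⟩ <;>
      simp [LinearMap.smul_apply, (hf a x).1, (hf a x).2, mul_smul_comm, smul_mul_assoc]

/-- The graded centroid `Γ(A)`: the sums of homogeneous centroid elements. -/
def gradedCentroid (𝒜 : G → Submodule K A) : Submodule K (Module.End K A) :=
  ⨆ h : G, centroid K ⊓ endGrading K 𝒜 h

/-- graded polynomial identity, variables indexed by `G × ℕ`, the variable `(g, i)` having
degree `g`. -/
def IsGradedPI (𝒜 : G → Submodule K A) (f : FreeNonUnitalNonAssocAlgebra K (G × ℕ)) : Prop :=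
  ∀ v : G × ℕ → A, (∀ p, v p ∈ 𝒜 p.1) → FreeNonUnitalNonAssocAlgebra.lift K v f = 0

/-- ordinary polynomial identity of a not necessarily associative algebra -/
def IsPI (f : FreeNonUnitalNonAssocAlgebra K ℕ) : Prop :=
  ∀ v : ℕ → A, FreeNonUnitalNonAssocAlgebra.lift K v f = 0

/-- A subset `S` of an associative unital `K`-algebra `B` satisfies an ordinary polynomial
identity. -/
def SatisfiesOrdinaryPI {B : Type*} [Ring B] [Algebra K B] (S : Set B) : Prop :=
  ∃ f : FreeAlgebra K ℕ, f ≠ 0 ∧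
    ∀ v : ℕ → B, (∀ i, v i ∈ S) → FreeAlgebra.lift K v f = 0

/-- isomorphism of `G`-graded algebras -/
def IsGradedIso {B : Type*} [NonUnitalNonAssocSemiring B] [Module K B]
    (𝒜 : G → Submodule K A) (ℬ : G → Submodule K B) : Prop :=
  ∃ ψ : A ≃ₗ[K] B, (∀ x y : A, ψ (x * y) = ψ x * ψ y) ∧
    ∀ g : G, (𝒜 g).map (ψ : A →ₗ[K] B) = ℬ g

end

noncomputable section

variable (K : Type*) [Field K]

/-- `f` is an ordinary (associative) polynomial identity of the subset `S` of the associative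
unital algebra `B`. -/
def IsAssocPIOn {B : Type*} [Ring B] [Algebra K B] (S : Set B) (f : FreeAlgebra K ℕ) : Prop :=
  ∀ v : ℕ → B, (∀ i, v i ∈ S) → FreeAlgebra.lift K v f = 0

end

noncomputable section

open TensorProduct

variable (F : Type*) [Field F] {G : Type*} [CommGroup G] [DecidableEq G]
variable {A : Type*} [NonUnitalNonAssocRing A] [Module F A] [SMulCommClass F A A]
  [IsScalarTower F A A]
variable (FF : Type*) [Field FF] [Algebra F FF]

/-- the commutant of `M(Ũ)` in `End_FF(Ũ)`, used to express the center of `M(Ũ)`. -/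
def multCommutant : Submodule FF (Module.End FF (FF ⊗[F] A)) where
  carrier := {f | ∀ m ∈ MultAlg FF (A := FF ⊗[F] A), f * m = m * f}
  add_mem' := by intro f g hf hg m hm; rw [add_mul, mul_add, hf m hm, hg m hm]
  zero_mem' := by intro m hm; rw [zero_mul, mul_zero]
  smul_mem' := by intro c f hf m hm; rw [smul_mul_assoc, mul_smul_comm, hf m hm]

/-- the base-change map `FF ⊗ End_F(A) → End_FF(FF ⊗ A)` -/
def basechangeEnd : (FF ⊗[F] Module.End F A) →ₗ[FF] Module.End FF (FF ⊗[F] A) :=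
  LinearMap.liftBaseChange FF (LinearMap.baseChangeHom F FF A A)

/-!
The polynomial identity makes `M(U)` unital. The multilinearised identity bounds the length of the
homogeneous families that `M(U)` can move to arbitrary families, since on such a family it could be
evaluated at shift operators, where a single monomial survives. By a graded version of the Jacobson
density theorem, a family to which no further homogeneous element can be added spans `U` over the
centroid; the element of `M(U)` fixing such a family is then the identity. It follows that the
centroid is contained in `M(U)`, so it is graded and equals `Γ(U)`, and it is the center of `M(U)`.

Over a field extension, an element of `F̃ ⊗ End U` is controlled by its slices along the functionals
`F̃ → F`, hence the base-change map `F̃ ⊗ End U → End Ũ` is injective, and both the grading of the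
endomorphisms and the centroid are compatible with it. The multiplication algebra is compatible with
it because it is generated by multiplications, and a multilinear identity of a spanning set holds on
the whole space.

Finally, `Γ(U)_e = F` means that a homogeneous `x` outside the `F`-span of a finite set `S` of
elements of the same degree is outside the centroid span of `S` as well. By density some element of
`M(U)` kills `S` and sends `x` to a prescribed element, so a nonzero homogeneous element
`c ⊗ x + ∑ cᵢ ⊗ uᵢ` of an ideal of `Ũ` generates `c ⊗ U`, and then everything.
-/

section MultilinearMaps

variable {R M N κ : Type*} [CommSemiring R] [AddCommMonoid M] [Module R M]

lemma sum_neg_one_pow_smul_map_sum_compl {ι : Type*} [AddCommGroup N] [Module R N] [Fintype κ]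
    [Fintype ι] [DecidableEq κ] [DecidableEq ι]
    (Φ : MultilinearMap R (fun _ : κ ↦ M) N) (y : κ → ι → M) :
    ∑ S : Finset ι, (-1 : ℤ) ^ S.card • Φ (fun j ↦ ∑ k ∈ Sᶜ, y j k) =
      ∑ r : κ → ι with r.Surjective, Φ (fun j ↦ y j (r j)) := by
  have avoids_iff (r : κ → ι) (S : Finset ι) :
      r ∈ Fintype.piFinset (fun _ ↦ Sᶜ) ↔ S ∈ (Finset.univ.image r)ᶜ.powerset := by
    simp only [Fintype.mem_piFinset, Finset.mem_compl, Finset.mem_powerset, Finset.subset_iff,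
      Finset.mem_image, Finset.mem_univ, true_and, not_exists]
    exact ⟨fun h k hk j hj ↦ h j (hj ▸ hk), fun h j hj ↦ h hj j rfl⟩
  have missed_eq_empty_iff (r : κ → ι) : (Finset.univ.image r)ᶜ = ∅ ↔ r.Surjective := by
    simp [Finset.compl_eq_empty_iff, Finset.eq_univ_iff_forall, Function.Surjective]
  -- Inclusion–exclusion: a non-surjective `r` is counted once, with sign, for every set it avoids.
  simp only [Φ.map_sum_finset, Finset.smul_sum]
  rw [Finset.sum_comm' (t' := Finset.univ) (s' := fun r ↦ (Finset.univ.image r)ᶜ.powerset)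
    (by simp [avoids_iff])]
  simp only [← Finset.sum_smul, Finset.sum_powerset_neg_one_pow_card, missed_eq_empty_iff,
    Finset.sum_filter, ite_smul, one_smul, zero_smul]

lemma map_eq_zero_of_mem_span [Finite κ] [AddCommMonoid N] [Module R N] {S : Set M}
    {Φ : MultilinearMap R (fun _ : κ ↦ M) N}
    (h : ∀ y : κ → M, (∀ j, y j ∈ S) → Φ y = 0) {y : κ → M}
    (hy : ∀ j, y j ∈ Submodule.span R S) : Φ y = 0 := by
  classical
  have := Fintype.ofFinite κ
  choose n c s hy using fun j ↦ Submodule.mem_span_set'.1 (hy j)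
  rw [← funext hy, Φ.map_sum]
  refine Finset.sum_eq_zero fun r _ ↦ ?_
  rw [Φ.map_smul_univ, h _ fun j ↦ (s j (r j)).2, smul_zero]

end MultilinearMaps

section PolynomialIdentities

variable {B X : Type*} [Ring B]

lemma sum_surjective_eq_sum_perm {d : ℕ} {C : Type*} [AddCommMonoid C]
    (Ψ : (Fin d → Fin d) → C) :
    ∑ r : Fin d → Fin d with r.Surjective, Ψ r = ∑ σ : Equiv.Perm (Fin d), Ψ σ := by
  symm
  refine Finset.sum_bij (fun σ _ ↦ ⇑σ) (by simp [Equiv.surjective])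
    (fun σ _ τ _ h ↦ DFunLike.coe_injective h) (fun r hr ↦ ?_) (fun _ _ ↦ rfl)
  have hr : r.Surjective := by simpa using hr
  exact ⟨Equiv.ofBijective r (Finite.surjective_iff_bijective.1 hr), by simp, rfl⟩

lemma sum_neg_one_pow_smul_prod_map [DecidableEq X] {d : ℕ} (W : Fin d → X) (y : Fin d → B)
    {w : List X} (hw : w.length ≤ d) :
    ∑ S : Finset (Fin d), (-1 : ℤ) ^ S.card •
        (w.map fun x ↦ ∑ k ∈ Sᶜ with W k = x, y k).prod =
      ∑ σ : Equiv.Perm (Fin d),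
        if w = List.ofFn (W ∘ σ) then (List.ofFn (y ∘ σ)).prod else 0 := by
  obtain ⟨l, V, rfl⟩ : ∃ (l : ℕ) (V : Fin l → X), w = List.ofFn V :=
    ⟨_, w.get, (List.ofFn_get w).symm⟩
  have prod_eq (r : Fin l → Fin d) :
      (List.ofFn fun j ↦ if W (r j) = V j then y (r j) else 0).prod =
      if List.ofFn V = List.ofFn (W ∘ r) then (List.ofFn (y ∘ r)).prod else 0 := by
    split_ifs with h
    · have hV : V = W ∘ r := List.ofFn_injective h
      simp [hV, Function.comp_def]
    · rw [List.ofFn_inj, funext_iff, not_forall] at h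
      obtain ⟨j, hj⟩ := h
      exact List.prod_eq_zero <| (List.mem_ofFn' _ _).2 ⟨j, if_neg fun h ↦ hj h.symm⟩
  have polarized := sum_neg_one_pow_smul_map_sum_compl (MultilinearMap.mkPiAlgebraFin ℤ l B)
    (fun j k ↦ if W k = V j then y k else 0)
  simp only [MultilinearMap.mkPiAlgebraFin_apply, prod_eq] at polarized
  simp only [List.map_ofFn, Function.comp_def _ V, Finset.sum_filter]
  refine polarized.trans ?_
  rw [List.length_ofFn] at hw
  rcases hw.lt_or_eq with hlt | rfl
  · rw [Finset.sum_eq_zero, Finset.sum_eq_zero]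
    · exact fun σ _ ↦ if_neg fun h ↦ by simpa [hlt.ne] using congrArg List.length h
    · intro r hr
      have hr : r.Surjective := by simpa using hr
      have := Fintype.card_le_of_surjective r hr
      simp only [Fintype.card_fin] at this
      omega
  · exact sum_surjective_eq_sum_perm _

variable {K : Type*} [CommSemiring K]

lemma basisFreeMonoid_apply (w : FreeMonoid X) :
    FreeAlgebra.basisFreeMonoid K X w = (w.toList.map (FreeAlgebra.ι K)).prod := by
  have of_eq_map_prod : MonoidAlgebra.of K (FreeMonoid X) w =
      FreeAlgebra.equivMonoidAlgebraFreeMonoid (w.toList.map (FreeAlgebra.ι K)).prod := by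
    rw [map_list_prod, List.map_map]
    induction w using FreeMonoid.inductionOn' with
    | one => simp [MonoidAlgebra.one_def]
    | of_mul x w ih =>
      rw [map_mul, ih]
      simp [FreeAlgebra.equivMonoidAlgebraFreeMonoid]
  rw [← AlgEquiv.symm_apply_apply FreeAlgebra.equivMonoidAlgebraFreeMonoid (List.prod _),
    ← of_eq_map_prod]
  simp [FreeAlgebra.basisFreeMonoid]

variable [Algebra K B]

lemma lift_eq_sum_basisFreeMonoid_repr (v : X → B) (f : FreeAlgebra K X) :
    FreeAlgebra.lift K v f = ((FreeAlgebra.basisFreeMonoid K X).repr f).sum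
      fun w c ↦ c • (w.toList.map v).prod := by
  conv_lhs => rw [← (FreeAlgebra.basisFreeMonoid K X).linearCombination_repr f]
  simp [Finsupp.linearCombination_apply, Finsupp.sum, basisFreeMonoid_apply, map_list_prod,
    Function.comp_def]

/-- Evaluation of the multilinear polynomial `∑ σ, a σ • x_{σ 0} ⋯ x_{σ (d - 1)}`. -/
def multilinearEval {d : ℕ} (a : Equiv.Perm (Fin d) → K) :
    MultilinearMap K (fun _ : Fin d ↦ B) B :=
  ∑ σ, a σ • (MultilinearMap.mkPiAlgebraFin K d B).domDomCongr σ

lemma multilinearEval_apply {d : ℕ} (a : Equiv.Perm (Fin d) → K) (y : Fin d → B) :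
    multilinearEval a y = ∑ σ, a σ • (List.ofFn (y ∘ σ)).prod := by
  simp [multilinearEval, Function.comp_def]

lemma multilinearEval_algebraMap_comp {L C : Type*} [CommSemiring L] [Algebra K L] [Ring C]
    [Algebra L C] [Algebra K C] [IsScalarTower K L C] (φ : B →ₐ[K] C) {d : ℕ}
    (a : Equiv.Perm (Fin d) → K) (y : Fin d → B) :
    multilinearEval (algebraMap K L ∘ a) (φ ∘ y) = φ (multilinearEval a y) := by
  simp [multilinearEval_apply, map_list_prod, List.map_ofFn, Function.comp_def]

end PolynomialIdentities

section PolynomialIdentitiesOverField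

variable {K B : Type*} [Field K] [Ring B] [Algebra K B]

lemma SatisfiesOrdinaryPI.exists_multilinearEval_eq_zero {S : Submodule K B}
    (hPI : SatisfiesOrdinaryPI K (S : Set B)) :
    ∃ (d : ℕ) (a : Equiv.Perm (Fin d) → K), a 1 ≠ 0 ∧
      ∀ y : Fin d → B, (∀ k, y k ∈ S) → multilinearEval a y = 0 := by
  obtain ⟨f, hf, hfS⟩ := hPI
  set a := (FreeAlgebra.basisFreeMonoid K ℕ).repr f with a_def
  have a_ne_zero : a ≠ 0 := (FreeAlgebra.basisFreeMonoid K ℕ).repr.map_ne_zero_iff.2 hf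
  obtain ⟨w, hw, hmax⟩ := a.support.exists_max_image (fun v ↦ v.toList.length)
    (Finsupp.support_nonempty_iff.2 a_ne_zero)
  let W : Fin w.toList.length → ℕ := w.toList.get
  refine ⟨_, fun σ ↦ a (FreeMonoid.ofList (List.ofFn (W ∘ σ))), ?_, fun y hy ↦ ?_⟩
  · have ofFn_W : List.ofFn (W ∘ (1 : Equiv.Perm (Fin _))) = w.toList := List.ofFn_get _
    simpa only [ofFn_W, FreeMonoid.ofList_toList] using Finsupp.mem_support_iff.1 hw
  calc multilinearEval _ y
    _ = ∑ σ : Equiv.Perm _, a.sum fun v c ↦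
          c • if v.toList = List.ofFn (W ∘ σ) then (List.ofFn (y ∘ σ)).prod else 0 := by
      rw [multilinearEval_apply]
      refine Finset.sum_congr rfl fun σ _ ↦ ?_
      rw [Finsupp.sum, Finset.sum_eq_single (FreeMonoid.ofList (List.ofFn (W ∘ σ)))]
      · simp
      · exact fun v _ hv ↦ by rw [if_neg fun h ↦ hv (by rw [← h]; rfl), smul_zero]
      · exact fun h ↦ by rw [Finsupp.notMem_support_iff.1 h, zero_smul]
    _ = ∑ S : Finset _, (-1 : ℤ) ^ S.card •
          FreeAlgebra.lift K (fun x ↦ ∑ k ∈ Sᶜ with W k = x, y k) f := by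
      simp only [lift_eq_sum_basisFreeMonoid_repr, ← a_def, Finsupp.sum, Finset.smul_sum]
      rw [Finset.sum_comm, Finset.sum_comm (s := Finset.univ)]
      refine Finset.sum_congr rfl fun v hv ↦ ?_
      simp only [smul_comm _ (a v), ← Finset.smul_sum,
        sum_neg_one_pow_smul_prod_map W y (hmax v hv)]
    _ = 0 := Finset.sum_eq_zero fun S _ ↦ by
      rw [hfS _ fun x ↦ sum_mem fun k _ ↦ hy k, smul_zero]

lemma satisfiesOrdinaryPI_of_multilinearEval_eq_zero {S : Set B} {d : ℕ}
    {a : Equiv.Perm (Fin d) → K} (ha : a 1 ≠ 0)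
    (h : ∀ y : Fin d → B, (∀ k, y k ∈ S) → multilinearEval a y = 0) :
    SatisfiesOrdinaryPI K S := by
  let word (σ : Equiv.Perm (Fin d)) : FreeMonoid ℕ :=
    FreeMonoid.ofList (List.ofFn fun j ↦ (σ j : ℕ))
  have word_injective : word.Injective := fun σ τ h ↦ by
    have := List.ofFn_injective (FreeMonoid.ofList.injective h)
    exact Equiv.ext fun j ↦ Fin.ext (congrFun this j)
  refine ⟨∑ σ, a σ • FreeAlgebra.basisFreeMonoid K ℕ (word σ), fun hzero ↦ ha ?_, ?_⟩
  · exact Fintype.linearIndependent_iff.1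
      ((FreeAlgebra.basisFreeMonoid K ℕ).linearIndependent.comp word word_injective) a hzero 1
  · intro v hv
    rw [← h (fun k ↦ v k) fun k ↦ hv k, multilinearEval_apply]
    simp [word, basisFreeMonoid_apply, map_list_prod, List.map_ofFn, Function.comp_def]

end PolynomialIdentitiesOverField

section Slices

variable {R S E E' : Type*} [CommSemiring R] [Semiring S] [Algebra R S] [AddCommMonoid E]
  [Module R E] [AddCommMonoid E'] [Module R E']

/-- The slice map `S ⊗[R] E → E`, `c ⊗ e ↦ ψ c • e`, of a functional `ψ : S → R`. When `S` is free
over `R`, the slices of an element of `S ⊗[R] E` replace its coordinates in a basis of `S`. -/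
def slice (ψ : S →ₗ[R] R) : S ⊗[R] E →ₗ[R] E :=
  (TensorProduct.lid R E).toLinearMap ∘ₗ ψ.rTensor E

@[simp]
lemma slice_tmul (ψ : S →ₗ[R] R) (c : S) (e : E) : slice ψ (c ⊗ₜ[R] e) = ψ c • e := by
  simp [slice]

lemma slice_baseChange (ψ : S →ₗ[R] R) (f : E →ₗ[R] E') (y : S ⊗[R] E) :
    slice ψ (f.baseChange S y) = f (slice ψ y) := by
  induction y with
  | zero => simp
  | tmul c e => simp
  | add y z hy hz => simp only [map_add, hy, hz]

variable [Module.Free R S]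

lemma mem_baseChange_iff_forall_slice_mem {N : Submodule R E} {y : S ⊗[R] E} :
    y ∈ N.baseChange S ↔ ∀ ψ : S →ₗ[R] R, slice ψ y ∈ N := by
  classical
  refine ⟨?_, fun hy ↦ ?_⟩
  · rintro ⟨y, rfl⟩ ψ
    rw [slice_baseChange]
    exact (slice ψ y).2
  · let b := Module.Free.chooseBasis R S
    rw [← (equivFinsuppOfBasisLeft b).symm_apply_apply y, equivFinsuppOfBasisLeft_symm_apply]
    refine sum_mem fun i _ ↦ Submodule.tmul_mem_baseChange_of_mem _ ?_
    rw [equivFinsuppOfBasisLeft_apply]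
    exact hy (b.coord i)

lemma eq_zero_of_forall_slice_eq_zero {y : S ⊗[R] E}
    (hy : ∀ ψ : S →ₗ[R] R, slice ψ y = 0) : y = 0 := by
  have : y ∈ (⊥ : Submodule R E).baseChange S := mem_baseChange_iff_forall_slice_mem.2 hy
  simpa using this

lemma baseChange_inf (N P : Submodule R E) :
    (N ⊓ P).baseChange S = N.baseChange S ⊓ P.baseChange S := by
  ext y
  simp only [Submodule.mem_inf, mem_baseChange_iff_forall_slice_mem, forall_and]

end Slices

section BaseChangeSpan

variable {K L E : Type*} [Field K] [Ring L] [Algebra K L] [AddCommGroup E] [Module K E]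

lemma exists_sub_tmul_mem_baseChange_span {N : Submodule K E} {z : L ⊗[K] E}
    (hzN : z ∈ N.baseChange L) (hz : z ≠ 0) :
    ∃ (c : L) (x : E) (S : Set E), c ≠ 0 ∧ x ∈ N ∧ S.Finite ∧ S ⊆ N ∧
      x ∉ Submodule.span K S ∧ z - c ⊗ₜ[K] x ∈ (Submodule.span K S).baseChange L := by
  classical
  obtain ⟨y, rfl⟩ := hzN
  have hy : y ≠ 0 := fun h ↦ hz (by rw [h, map_zero])
  let b := Module.Basis.ofVectorSpace K N
  let a := (b.baseChange L).repr y
  obtain ⟨i, hi⟩ : a.support.Nonempty :=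
    Finsupp.support_nonempty_iff.2 ((b.baseChange L).repr.map_ne_zero_iff.2 hy)
  have y_eq : y = a i ⊗ₜ[K] b i + ∑ j ∈ a.support.erase i, a j ⊗ₜ[K] b j := by
    rw [Finset.add_sum_erase _ (fun j ↦ a j ⊗ₜ[K] b j) hi]
    conv_lhs => rw [← (b.baseChange L).linearCombination_repr y]
    simp [Finsupp.linearCombination_apply, Finsupp.sum, smul_tmul', a]
  refine ⟨a i, b i, (fun j ↦ (b j : E)) '' (a.support.erase i), Finsupp.mem_support_iff.1 hi,
    (b i).2, Set.toFinite _, ?_, ?_, ?_⟩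
  · rintro _ ⟨j, -, rfl⟩
    exact (b j).2
  · have := b.linearIndependent.map' N.subtype N.ker_subtype
    exact this.notMem_span_image (s := a.support.erase i) (by simp)
  · rw [y_eq, map_add, LinearMap.baseChange_tmul, Submodule.subtype_apply, add_sub_cancel_left,
      map_sum]
    exact sum_mem fun j hj ↦ Submodule.tmul_mem_baseChange_of_mem _
      (Submodule.subset_span ⟨j, hj, rfl⟩)

end BaseChangeSpan

section MultiplicationAlgebra

variable {F}

lemma mulLeft_mem_multAlg (a : A) : LinearMap.mulLeft F a ∈ MultAlg F (A := A) :=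
  NonUnitalAlgebra.subset_adjoin F (.inl ⟨a, rfl⟩)

lemma mulRight_mem_multAlg (a : A) : LinearMap.mulRight F a ∈ MultAlg F (A := A) :=
  NonUnitalAlgebra.subset_adjoin F (.inr ⟨a, rfl⟩)

lemma IsMulIdeal.apply_mem {I : Submodule F A} (hI : IsMulIdeal F I) {m : Module.End F A}
    (hm : m ∈ MultAlg F (A := A)) {x : A} (hx : x ∈ I) : m x ∈ I := by
  induction hm using NonUnitalAlgebra.adjoin_induction generalizing x with
  | mem _ hm =>
    rcases hm with ⟨a, rfl⟩ | ⟨a, rfl⟩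
    · exact (hI a x hx).1
    · exact (hI a x hx).2
  | add m n _ _ hm hn => exact I.add_mem (hm hx) (hn hx)
  | zero => exact I.zero_mem
  | mul _ _ _ _ hm hn => exact hm (hn hx)
  | smul c m _ hm => exact I.smul_mem c (hm hx)

lemma mem_centroid_iff_forall_mul_comm {φ : Module.End F A} :
    φ ∈ centroid F (A := A) ↔ ∀ m ∈ MultAlg F (A := A), φ * m = m * φ := by
  refine ⟨fun hφ m hm ↦ ?_, fun h a x ↦ ⟨?_, ?_⟩⟩
  · induction hm using NonUnitalAlgebra.adjoin_induction with
    | mem m hm =>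
      rcases hm with ⟨a, rfl⟩ | ⟨a, rfl⟩
      · exact LinearMap.ext fun x ↦ (hφ a x).1
      · exact LinearMap.ext fun x ↦ (hφ a x).2
    | add m n _ _ hm hn => rw [mul_add, add_mul, hm, hn]
    | zero => rw [mul_zero, zero_mul]
    | mul m n _ _ hm hn => rw [← mul_assoc, hm, mul_assoc, hn, mul_assoc]
    | smul c m _ hm => rw [mul_smul_comm, smul_mul_assoc, hm]
  · exact LinearMap.congr_fun (h _ (mulLeft_mem_multAlg a)) x
  · exact LinearMap.congr_fun (h _ (mulRight_mem_multAlg a)) x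

lemma apply_apply_of_mem_centroid {φ m : Module.End F A} (hφ : φ ∈ centroid F (A := A))
    (hm : m ∈ MultAlg F (A := A)) (x : A) : m (φ x) = φ (m x) :=
  (LinearMap.congr_fun (mem_centroid_iff_forall_mul_comm.1 hφ m hm) x).symm

lemma mul_mem_multAlg_of_mem_centroid {φ m : Module.End F A} (hφ : φ ∈ centroid F (A := A))
    (hm : m ∈ MultAlg F (A := A)) : φ * m ∈ MultAlg F (A := A) := by
  induction hm using NonUnitalAlgebra.adjoin_induction with
  | mem m hm =>
    rcases hm with ⟨a, rfl⟩ | ⟨a, rfl⟩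
    · have : φ * LinearMap.mulLeft F a = LinearMap.mulLeft F (φ a) :=
        LinearMap.ext fun x ↦ (hφ x a).2
      exact this ▸ mulLeft_mem_multAlg (φ a)
    · have : φ * LinearMap.mulRight F a = LinearMap.mulRight F (φ a) :=
        LinearMap.ext fun x ↦ (hφ x a).1
      exact this ▸ mulRight_mem_multAlg (φ a)
  | add m n _ _ hm hn => exact mul_add φ m n ▸ add_mem hm hn
  | zero => exact (mul_zero φ).symm ▸ zero_mem _
  | mul m n _ hn hm _ => exact mul_assoc φ m n ▸ mul_mem hm hn
  | smul c m _ hm => exact mul_smul_comm c φ m ▸ SMulMemClass.smul_mem c hm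

lemma centroid_le_multAlg_of_one_mem (hone : 1 ∈ MultAlg F (A := A)) :
    centroid F (A := A) ≤ (MultAlg F (A := A)).toSubmodule := fun φ hφ ↦ by
  simpa using mul_mem_multAlg_of_mem_centroid hφ hone

variable (F) in
/-- The elements of the multiplication algebra that kill every element of `S`. -/
def multAnnihilator (S : Set A) : Submodule F (Module.End F A) where
  carrier := {m | m ∈ MultAlg F (A := A) ∧ ∀ u ∈ S, m u = 0}
  add_mem' hm hn := ⟨add_mem hm.1 hn.1, fun u hu ↦ by simp [hm.2 u hu, hn.2 u hu]⟩
  zero_mem' := ⟨zero_mem _, fun _ _ ↦ rfl⟩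
  smul_mem' c _ hm := ⟨SMulMemClass.smul_mem c hm.1, fun u hu ↦ by simp [hm.2 u hu]⟩

lemma mul_mem_multAnnihilator {S : Set A} {m n : Module.End F A} (hm : m ∈ MultAlg F (A := A))
    (hn : n ∈ multAnnihilator F S) : m * n ∈ multAnnihilator F S :=
  ⟨mul_mem hm hn.1, fun u hu ↦ by rw [Module.End.mul_apply, hn.2 u hu, map_zero]⟩

lemma mem_multAnnihilator_insert {S : Set A} {u : A} {m : Module.End F A} :
    m ∈ multAnnihilator F (insert u S) ↔ m ∈ multAnnihilator F S ∧ m u = 0 :=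
  ⟨fun h ↦ ⟨⟨h.1, fun v hv ↦ h.2 v (.inr hv)⟩, h.2 u (.inl rfl)⟩,
    fun h ↦ ⟨h.1.1, Set.forall_mem_insert.2 ⟨h.2, h.1.2⟩⟩⟩

variable (F) in
/-- The subspace `∑ φ S`, the sum being over all `φ` in the centroid; for a graded simple algebra
it plays the role of the linear span over the centroid. -/
def centroidSpan (S : Set A) : Submodule F A :=
  Submodule.span F (Set.image2 (fun (φ : Module.End F A) u ↦ φ u) (centroid F (A := A)) S)

lemma apply_mem_centroidSpan {S : Set A} {φ : Module.End F A} (hφ : φ ∈ centroid F (A := A))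
    {u : A} (hu : u ∈ S) : φ u ∈ centroidSpan F S :=
  Submodule.subset_span (Set.mem_image2_of_mem hφ hu)

lemma centroidSpan_mono {S T : Set A} (h : S ⊆ T) : centroidSpan F S ≤ centroidSpan F T :=
  Submodule.span_mono (Set.image2_subset_left h)

lemma apply_eq_self_of_mem_centroidSpan {S : Set A} {m : Module.End F A}
    (hm : m ∈ MultAlg F (A := A)) (hmS : ∀ u ∈ S, m u = u) {x : A} (hx : x ∈ centroidSpan F S) :
    m x = x := by
  have le_eqLocus : centroidSpan F S ≤ LinearMap.eqLocus m 1 :=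
    Submodule.span_le.2 <| Set.image2_subset_iff.2 fun φ hφ u hu ↦
      (apply_apply_of_mem_centroid hφ hm u).trans (congrArg φ (hmS u hu))
  exact le_eqLocus hx

/-- The element `φ` is `m u ↦ m x`, where `m` runs through the annihilator of `S`. -/
lemma exists_mem_centroid_forall_apply_eq {S : Set A} {u x : A}
    (hu : ∀ a, ∃ m ∈ multAnnihilator F S, m u = a)
    (hx : ∀ m ∈ multAnnihilator F (insert u S), m x = 0) :
    ∃ φ ∈ centroid F (A := A), ∀ m ∈ multAnnihilator F S, φ (m u) = m x := by
  let evalAt (y : A) : multAnnihilator F S →ₗ[F] A :=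
    LinearMap.applyₗ y ∘ₗ (multAnnihilator F S).subtype
  have evalAt_surjective : LinearMap.range (evalAt u) = ⊤ :=
    LinearMap.range_eq_top.2 fun a ↦ let ⟨m, hm, hma⟩ := hu a; ⟨⟨m, hm⟩, hma⟩
  have ker_le_ker : LinearMap.ker (evalAt u) ≤ LinearMap.ker (evalAt x) := fun m hm ↦
    hx m (mem_multAnnihilator_insert.2 ⟨m.2, hm⟩)
  obtain ⟨s, hs⟩ := (evalAt u).exists_rightInverse_of_surjective evalAt_surjective
  have φ_apply : ∀ m ∈ multAnnihilator F S, (evalAt x ∘ₗ s) (m u) = m x := fun m hm ↦ by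
    have : s (m u) - ⟨m, hm⟩ ∈ LinearMap.ker (evalAt u) := by
      rw [LinearMap.mem_ker, map_sub, sub_eq_zero]
      exact LinearMap.congr_fun hs (m u)
    exact sub_eq_zero.1 ((map_sub (evalAt x) _ _).symm.trans (ker_le_ker this))
  refine ⟨evalAt x ∘ₗ s, mem_centroid_iff_forall_mul_comm.2 fun n hn ↦ LinearMap.ext fun a ↦ ?_,
    φ_apply⟩
  obtain ⟨m, hm, rfl⟩ := hu a
  have := φ_apply _ (mul_mem_multAnnihilator hn hm)
  rw [Module.End.mul_apply, Module.End.mul_apply, φ_apply m hm]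
  exact this

end MultiplicationAlgebra

section Projections

variable {R V W ι : Type*} [Semiring R] [AddCommMonoid V] [Module R V] [AddCommMonoid W]
  [Module R W] [DecidableEq ι] {𝒱 : ι → Submodule R V}

lemma linearMap_ext_of_isInternal (h𝒱 : DirectSum.IsInternal 𝒱)
    {f f' : V →ₗ[R] W} (h : ∀ i, ∀ x ∈ 𝒱 i, f x = f' x) : f = f' :=
  letI := h𝒱.chooseDecomposition
  DirectSum.decompose_lhom_ext 𝒱 fun i ↦ LinearMap.ext fun x ↦ h i x x.2

variable (h𝒱 : DirectSum.IsInternal 𝒱)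

/-- The projection of `V` onto the component of index `i` of an internal direct sum
decomposition. -/
def componentProj (i : ι) : V →ₗ[R] V :=
  letI := h𝒱.chooseDecomposition
  (𝒱 i).subtype ∘ₗ DirectSum.component R ι (fun i ↦ 𝒱 i) i ∘ₗ
    (DirectSum.decomposeLinearEquiv 𝒱).toLinearMap

lemma componentProj_mem (i : ι) (x : V) : componentProj h𝒱 i x ∈ 𝒱 i :=
  Subtype.coe_prop _

lemma componentProj_of_mem {i : ι} {x : V} (hx : x ∈ 𝒱 i) : componentProj h𝒱 i x = x :=
  letI := h𝒱.chooseDecomposition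
  DirectSum.decompose_of_mem_same 𝒱 hx

lemma componentProj_of_mem_of_ne {i j : ι} (hij : i ≠ j) {x : V} (hx : x ∈ 𝒱 i) :
    componentProj h𝒱 j x = 0 :=
  letI := h𝒱.chooseDecomposition
  DirectSum.decompose_of_mem_ne 𝒱 hx hij

lemma mem_iSup_inf_of_forall_componentProj_mem {N : Submodule R V} {x : V}
    (hx : ∀ i, componentProj h𝒱 i x ∈ N) : x ∈ ⨆ i, N ⊓ 𝒱 i := by
  classical
  let := h𝒱.chooseDecomposition
  rw [← DirectSum.sum_support_decompose 𝒱 x]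
  exact sum_mem fun i _ ↦ Submodule.mem_iSup_of_mem i ⟨hx i, componentProj_mem h𝒱 i x⟩

lemma isHomogSubmodule_of_forall_componentProj_mem {K U : Type*} [Field K]
    [NonUnitalNonAssocSemiring U] [Module K U] {𝒰 : ι → Submodule K U}
    (h𝒰 : DirectSum.IsInternal 𝒰) {I : Submodule K U}
    (hI : ∀ i, ∀ x ∈ I, componentProj h𝒰 i x ∈ I) : IsHomogSubmodule K 𝒰 I :=
  le_antisymm (fun x hx ↦ mem_iSup_inf_of_forall_componentProj_mem h𝒰 fun i ↦ hI i x hx)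
    (iSup_le fun _ ↦ inf_le_left)

end Projections

section EndomorphismComponents

variable {K U : Type*} [Field K] [NonUnitalNonAssocSemiring U] [Module K U] {𝒰 : G → Submodule K U}

lemma componentProj_apply_of_mem_endGrading (h𝒰 : DirectSum.IsInternal 𝒰) {k : G}
    {ψ : Module.End K U} (hψ : ψ ∈ endGrading K 𝒰 k) (g : G) (x : U) :
    componentProj h𝒰 (k * g) (ψ x) = ψ (componentProj h𝒰 g x) := by
  refine LinearMap.congr_fun (f := componentProj h𝒰 (k * g) ∘ₗ ψ) (g := ψ ∘ₗ componentProj h𝒰 g)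
    (linearMap_ext_of_isInternal h𝒰 fun l y hy ↦ ?_) x
  rw [LinearMap.comp_apply, LinearMap.comp_apply]
  obtain rfl | hlg := eq_or_ne l g
  · rw [componentProj_of_mem h𝒰 hy, componentProj_of_mem h𝒰 (hψ l y hy)]
  · rw [componentProj_of_mem_of_ne h𝒰 hlg hy, map_zero,
      componentProj_of_mem_of_ne h𝒰 (mul_right_injective k |>.ne hlg) (hψ l y hy)]

/-- The homogeneous component of degree `h` of an endomorphism `φ`: on `𝒰 g` it is `φ` followed by
the projection to `𝒰 (h * g)`. It makes sense for every `φ`, although `φ` need not be a finite sum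
of homogeneous endomorphisms. -/
def homogComponent (h𝒰 : DirectSum.IsInternal 𝒰) (h : G) :
    Module.End K U →ₗ[K] Module.End K U where
  toFun φ :=
    letI := h𝒰.chooseDecomposition
    DirectSum.toModule K G U (fun g ↦ componentProj h𝒰 (h * g) ∘ₗ φ ∘ₗ (𝒰 g).subtype) ∘ₗ
      (DirectSum.decomposeLinearEquiv 𝒰).toLinearMap
  map_add' φ ψ := by
    let := h𝒰.chooseDecomposition
    refine linearMap_ext_of_isInternal h𝒰 fun g x hx ↦ ?_
    lift x to 𝒰 g using hx
    simp [DirectSum.toModule_lof]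
  map_smul' c φ := by
    let := h𝒰.chooseDecomposition
    refine linearMap_ext_of_isInternal h𝒰 fun g x hx ↦ ?_
    lift x to 𝒰 g using hx
    simp

lemma homogComponent_apply_of_mem (h𝒰 : DirectSum.IsInternal 𝒰) (h : G) (φ : Module.End K U)
    {g : G} {x : U} (hx : x ∈ 𝒰 g) :
    homogComponent h𝒰 h φ x = componentProj h𝒰 (h * g) (φ x) := by
  let := h𝒰.chooseDecomposition
  lift x to 𝒰 g using hx
  simp [homogComponent]

lemma homogComponent_mem_endGrading (h𝒰 : DirectSum.IsInternal 𝒰) (h : G) (φ : Module.End K U) :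
    homogComponent h𝒰 h φ ∈ endGrading K 𝒰 h := fun g x hx ↦ by
  rw [homogComponent_apply_of_mem h𝒰 h φ hx]
  exact componentProj_mem h𝒰 _ _

lemma homogComponent_of_mem (h𝒰 : DirectSum.IsInternal 𝒰) {h : G} {φ : Module.End K U}
    (hφ : φ ∈ endGrading K 𝒰 h) : homogComponent h𝒰 h φ = φ :=
  linearMap_ext_of_isInternal h𝒰 fun g x hx ↦ by
    rw [homogComponent_apply_of_mem h𝒰 h φ hx, componentProj_of_mem h𝒰 (hφ g x hx)]

lemma homogComponent_of_mem_of_ne (h𝒰 : DirectSum.IsInternal 𝒰) {h k : G} (hkh : k ≠ h)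
    {φ : Module.End K U} (hφ : φ ∈ endGrading K 𝒰 k) : homogComponent h𝒰 h φ = 0 :=
  linearMap_ext_of_isInternal h𝒰 fun g x hx ↦ by
    rw [homogComponent_apply_of_mem h𝒰 h φ hx, LinearMap.zero_apply,
      componentProj_of_mem_of_ne h𝒰 ((mul_left_injective g).ne hkh) (hφ g x hx)]

lemma mem_iSup_inf_endGrading (h𝒰 : DirectSum.IsInternal 𝒰) {N : Submodule K (Module.End K U)}
    {φ : Module.End K U} (hφ : φ ∈ ⨆ h, endGrading K 𝒰 h)
    (hN : ∀ h, homogComponent h𝒰 h φ ∈ N) : φ ∈ ⨆ h, N ⊓ endGrading K 𝒰 h := by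
  obtain ⟨c, hc, rfl⟩ := (Submodule.mem_iSup_iff_exists_finsupp _ _).1 hφ
  refine sum_mem fun h hh ↦ Submodule.mem_iSup_of_mem h ⟨?_, hc h⟩
  have component_eq : homogComponent h𝒰 h (c.sum fun _ ψ ↦ ψ) = c h := by
    rw [Finsupp.sum, map_sum, Finset.sum_eq_single h, homogComponent_of_mem h𝒰 (hc h)]
    · exact fun k _ hkh ↦ homogComponent_of_mem_of_ne h𝒰 hkh (hc k)
    · exact fun hh' ↦ absurd hh hh'
  exact component_eq ▸ hN h

lemma homogComponent_mul_comm (h𝒰 : DirectSum.IsInternal 𝒰) (h : G) {k : G}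
    {φ ψ : Module.End K U} (hψ : ψ ∈ endGrading K 𝒰 k) (hφψ : φ * ψ = ψ * φ) :
    homogComponent h𝒰 h φ * ψ = ψ * homogComponent h𝒰 h φ :=
  linearMap_ext_of_isInternal h𝒰 fun g x hx ↦ by
    rw [Module.End.mul_apply, Module.End.mul_apply, homogComponent_apply_of_mem h𝒰 h φ (hψ g x hx),
      homogComponent_apply_of_mem h𝒰 h φ hx, ← componentProj_apply_of_mem_endGrading h𝒰 hψ,
      mul_left_comm k h g]
    exact congrArg _ (LinearMap.congr_fun hφψ x)

end EndomorphismComponents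

section GradedMultiplicationAlgebra

variable {F} {𝒜 : G → Submodule F A}

lemma IsAlgGrading.multAlg_le_iSup (hgr : IsAlgGrading F 𝒜) :
    (MultAlg F (A := A)).toSubmodule ≤
      ⨆ h, (MultAlg F (A := A)).toSubmodule ⊓ endGrading F 𝒜 h := by
  set N := ⨆ h, (MultAlg F (A := A)).toSubmodule ⊓ endGrading F 𝒜 h with N_def
  have N_mul_N_le : N * N ≤ N := by
    conv_lhs => rw [N_def, Submodule.iSup_mul]
    refine iSup_le fun h ↦ ?_
    rw [Submodule.mul_iSup]
    refine iSup_le fun k ↦ Submodule.mul_le.2 fun m hm n hn ↦ ?_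
    refine Submodule.mem_iSup_of_mem (h * k) ⟨(MultAlg F).mul_mem hm.1 hn.1, fun g x hx ↦ ?_⟩
    rw [mul_assoc]
    exact hm.2 _ _ (hn.2 g x hx)
  have generators_mem (f : A →ₗ[F] Module.End F A) (hfM : ∀ a, f a ∈ MultAlg F (A := A))
      (hf : ∀ g, ∀ a ∈ 𝒜 g, f a ∈ endGrading F 𝒜 g) (a : A) : f a ∈ N := by
    have : ⊤ ≤ N.comap f := hgr.1.submodule_iSup_eq_top ▸ iSup_le fun g b hb ↦
      Submodule.mem_iSup_of_mem g ⟨hfM b, hf g b hb⟩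
    exact this trivial
  intro m hm
  induction hm using NonUnitalAlgebra.adjoin_induction with
  | mem m hm =>
    rcases hm with ⟨a, rfl⟩ | ⟨a, rfl⟩
    · exact generators_mem (LinearMap.mul F A) mulLeft_mem_multAlg
        (fun g b hb k x hx ↦ hgr.2 g k b hb x hx) a
    · exact generators_mem (LinearMap.mul F A).flip mulRight_mem_multAlg
        (fun g b hb k x hx ↦ mul_comm k g ▸ hgr.2 k g x hx b hb) a
  | add m n _ _ hm hn => exact N.add_mem hm hn
  | zero => exact N.zero_mem
  | mul m n _ _ hm hn => exact N_mul_N_le (Submodule.mul_mem_mul hm hn)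
  | smul c m _ hm => exact N.smul_mem c hm

lemma IsAlgGrading.homogComponent_mem_multAlg (hgr : IsAlgGrading F 𝒜) (h : G)
    {m : Module.End F A} (hm : m ∈ MultAlg F (A := A)) :
    homogComponent hgr.1 h m ∈ MultAlg F (A := A) := by
  have : (⨆ k, (MultAlg F (A := A)).toSubmodule ⊓ endGrading F 𝒜 k) ≤
      (MultAlg F (A := A)).toSubmodule.comap (homogComponent hgr.1 h) := by
    refine iSup_le fun k n hn ↦ ?_
    rw [Submodule.mem_comap]
    obtain rfl | hkh := eq_or_ne k h
    · rw [homogComponent_of_mem hgr.1 hn.2]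
      exact hn.1
    · rw [homogComponent_of_mem_of_ne hgr.1 hkh hn.2]
      exact zero_mem _
  exact this (hgr.multAlg_le_iSup hm)

lemma IsAlgGrading.homogComponent_mem_multAnnihilator (hgr : IsAlgGrading F 𝒜) {S : Set A}
    (hS : ∀ u ∈ S, ∃ g, u ∈ 𝒜 g) (h : G) {m : Module.End F A} (hm : m ∈ multAnnihilator F S) :
    homogComponent hgr.1 h m ∈ multAnnihilator F S := by
  refine ⟨hgr.homogComponent_mem_multAlg h hm.1, fun u hu ↦ ?_⟩
  obtain ⟨g, hg⟩ := hS u hu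
  rw [homogComponent_apply_of_mem hgr.1 h m hg, hm.2 u hu, map_zero]

lemma IsAlgGrading.homogComponent_mem_centroid (hgr : IsAlgGrading F 𝒜) (h : G)
    {φ : Module.End F A} (hφ : φ ∈ centroid F (A := A)) :
    homogComponent hgr.1 h φ ∈ centroid F (A := A) := by
  refine mem_centroid_iff_forall_mul_comm.2 fun m hm ↦ ?_
  replace hm := hgr.multAlg_le_iSup hm
  induction hm using Submodule.iSup_induction' with
  | mem k n hn =>
    exact homogComponent_mul_comm hgr.1 h hn.2 (mem_centroid_iff_forall_mul_comm.1 hφ n hn.1)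
  | zero => rw [mul_zero, zero_mul]
  | add m n _ _ hm hn => rw [mul_add, add_mul, hm, hn]

lemma IsAlgGrading.gradedCentroid_eq_centroid (hgr : IsAlgGrading F 𝒜)
    (hle : centroid F (A := A) ≤ (MultAlg F (A := A)).toSubmodule) :
    gradedCentroid F 𝒜 = centroid F (A := A) := by
  refine le_antisymm (iSup_le fun h ↦ inf_le_left) fun φ hφ ↦
    mem_iSup_inf_endGrading hgr.1 ?_ fun h ↦ hgr.homogComponent_mem_centroid h hφ
  have : ⨆ h, (MultAlg F (A := A)).toSubmodule ⊓ endGrading F 𝒜 h ≤ ⨆ h, endGrading F 𝒜 h :=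
    iSup_mono fun h ↦ inf_le_right
  exact this (hgr.multAlg_le_iSup (hle hφ))

end GradedMultiplicationAlgebra

section Interpolation

variable {K V : Type*} [CommSemiring K] [AddCommGroup V] [Module K V]

/-- The family `u` can be moved to every other family by an endomorphism in `M`: the conclusion of
the Jacobson density theorem. -/
def Interpolates {ι : Type*} (M : Set (Module.End K V)) (u : ι → V) : Prop :=
  ∀ f : ι → V, ∃ m ∈ M, ∀ i, m (u i) = f i

lemma list_prod_shift_apply_last {d : ℕ} {u : Fin (d + 1) → V} {X : Fin d → Module.End K V}
    (hX : ∀ j i, X j (u i) = if i = j.succ then u j.castSucc else 0) (l : List (Fin d)) (s : ℕ)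
    (hs : s + l.length = d) :
    (l.map X).prod (u (Fin.last d)) =
      if l.map Fin.val = List.range' s l.length then u ⟨s, by omega⟩ else 0 := by
  induction l generalizing s with
  | nil => simpa using congrArg u (Fin.ext hs.symm)
  | cons j l ih =>
    rw [List.length_cons] at hs
    rw [List.map_cons, List.prod_cons, Module.End.mul_apply, ih (s + 1) (by omega), apply_ite (X j),
      map_zero, hX]
    have index_eq_iff : (⟨s + 1, by omega⟩ : Fin (d + 1)) = j.succ ↔ (j : ℕ) = s := by
      rw [Fin.ext_iff, Fin.val_succ, Nat.add_right_cancel_iff, eq_comm]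
    simp only [List.map_cons, List.length_cons, List.range'_succ, List.cons.injEq, index_eq_iff]
    by_cases hj : (j : ℕ) = s
    · subst hj
      simp only [true_and, if_true]
      rfl
    · simp [hj]

lemma multilinearEval_shift_apply_last {d : ℕ} (a : Equiv.Perm (Fin d) → K) {u : Fin (d + 1) → V}
    {X : Fin d → Module.End K V}
    (hX : ∀ j i, X j (u i) = if i = j.succ then u j.castSucc else 0) :
    multilinearEval a X (u (Fin.last d)) = a 1 • u 0 := by
  have prod_apply (σ : Equiv.Perm (Fin d)) :
      (List.ofFn (X ∘ σ)).prod (u (Fin.last d)) = if σ = 1 then u 0 else 0 := by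
    have eq_one_iff : (List.ofFn σ).map Fin.val = List.range' 0 d ↔ σ = 1 := by
      rw [← List.range_eq_range', ← List.map_coe_finRange_eq_range, ← List.ofFn_id,
        (List.map_injective_iff.2 Fin.val_injective).eq_iff, List.ofFn_inj]
      exact DFunLike.coe_fn_eq (g := (1 : Equiv.Perm (Fin d)))
    rw [← List.map_ofFn, list_prod_shift_apply_last hX _ 0 (by simp)]
    simp only [List.length_ofFn, eq_one_iff]
    rfl
  simp [multilinearEval_apply, LinearMap.sum_apply, prod_apply]

lemma not_interpolates_of_multilinearEval_eq_zero [IsCancelMulZero K]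
    [Module.IsTorsionFree K V] [Nontrivial V] {M : Set (Module.End K V)} {d : ℕ}
    {a : Equiv.Perm (Fin d) → K} (ha : a 1 ≠ 0)
    (hM : ∀ y : Fin d → Module.End K V, (∀ k, y k ∈ M) → multilinearEval a y = 0)
    (u : Fin (d + 1) → V) : ¬ Interpolates M u := by
  intro hu
  -- On these shifts only the monomial of the identity permutation carries the last `u` to `u 0`.
  choose X hXM hX using fun j : Fin d ↦ hu fun i ↦ if i = j.succ then u j.castSucc else 0
  have smul_u_zero : a 1 • u 0 = 0 := by
    rw [← multilinearEval_shift_apply_last a hX, hM X hXM, LinearMap.zero_apply]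
  obtain ⟨v, hv⟩ := exists_ne (0 : V)
  obtain ⟨m, -, hm⟩ := hu fun _ ↦ v
  refine hv ?_
  rw [← hm 0, (smul_eq_zero.1 smul_u_zero).resolve_left ha, map_zero]

end Interpolation

section GradedDensity

variable {F} {𝒜 : G → Submodule F A}

lemma IsAlgGrading.eq_zero_of_forall_multAlg_apply_eq_zero (hgr : IsAlgGrading F 𝒜)
    (hsimp : IsGradedSimple F 𝒜) {x : A} (hx : ∀ m ∈ MultAlg F (A := A), m x = 0) : x = 0 := by
  let I : Submodule F A := ⨅ m ∈ MultAlg F (A := A), LinearMap.ker m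
  have mem_I {y : A} : y ∈ I ↔ ∀ m ∈ MultAlg F (A := A), m y = 0 := by simp [I]
  have isMulIdeal : IsMulIdeal F I := fun a y hy ↦
    ⟨mem_I.2 fun m hm ↦ mem_I.1 hy _ (mul_mem hm (mulLeft_mem_multAlg a)),
      mem_I.2 fun m hm ↦ mem_I.1 hy _ (mul_mem hm (mulRight_mem_multAlg a))⟩
  have isHomog : IsHomogSubmodule F 𝒜 I := by
    refine isHomogSubmodule_of_forall_componentProj_mem hgr.1 fun g y hy ↦ mem_I.2 fun m hm ↦ ?_
    replace hm := hgr.multAlg_le_iSup hm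
    induction hm using Submodule.iSup_induction' with
    | mem k n hn =>
      rw [← componentProj_apply_of_mem_endGrading hgr.1 hn.2, mem_I.1 hy n hn.1, map_zero]
    | zero => rfl
    | add m n _ _ hm hn => rw [LinearMap.add_apply, hm, hn, add_zero]
  obtain ⟨⟨a, b, hab⟩, hideal⟩ := hsimp
  obtain hbot | htop := hideal I isMulIdeal isHomog
  · exact (Submodule.mem_bot F).1 (hbot ▸ mem_I.2 hx)
  · have hb : b ∈ I := htop ▸ trivial
    exact absurd (mem_I.1 hb _ (mulLeft_mem_multAlg a)) hab

lemma IsAlgGrading.multAnnihilator_apply_eq_zero_or_surjective (hgr : IsAlgGrading F 𝒜)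
    (hsimp : IsGradedSimple F 𝒜) {S : Set A} (hS : ∀ u ∈ S, ∃ g, u ∈ 𝒜 g) {x : A} {k : G}
    (hx : x ∈ 𝒜 k) :
    (∀ m ∈ multAnnihilator F S, m x = 0) ∨ ∀ a, ∃ m ∈ multAnnihilator F S, m x = a := by
  let I : Submodule F A := (multAnnihilator F S).map (LinearMap.applyₗ x)
  have mem_I {a : A} : a ∈ I ↔ ∃ m ∈ multAnnihilator F S, m x = a := Iff.rfl
  have isMulIdeal : IsMulIdeal F I := by
    rintro a _ ⟨m, hm, rfl⟩
    exact ⟨mem_I.2 ⟨_, mul_mem_multAnnihilator (mulLeft_mem_multAlg a) hm, rfl⟩,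
      mem_I.2 ⟨_, mul_mem_multAnnihilator (mulRight_mem_multAlg a) hm, rfl⟩⟩
  have isHomog : IsHomogSubmodule F 𝒜 I := by
    refine isHomogSubmodule_of_forall_componentProj_mem hgr.1 ?_
    rintro g _ ⟨m, hm, rfl⟩
    refine mem_I.2 ⟨_, hgr.homogComponent_mem_multAnnihilator hS (g * k⁻¹) hm, ?_⟩
    rw [homogComponent_apply_of_mem hgr.1 _ m hx, inv_mul_cancel_right,
      LinearMap.applyₗ_apply_apply]
  refine (hsimp.2 I isMulIdeal isHomog).imp (fun hbot m hm ↦ ?_) fun htop a ↦ ?_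
  · exact (Submodule.mem_bot F).1 (hbot ▸ mem_I.2 ⟨m, hm, rfl⟩)
  · exact mem_I.1 (htop ▸ trivial)

lemma IsAlgGrading.mem_centroidSpan_of_forall_apply_eq_zero (hgr : IsAlgGrading F 𝒜)
    (hsimp : IsGradedSimple F 𝒜) {S : Set A} (hfin : S.Finite) (hS : ∀ u ∈ S, ∃ g, u ∈ 𝒜 g)
    {x : A} (hx : ∀ m ∈ multAnnihilator F S, m x = 0) : x ∈ centroidSpan F S := by
  induction S, hfin using Set.Finite.induction_on generalizing x with
  | empty =>
    rw [hgr.eq_zero_of_forall_multAlg_apply_eq_zero hsimp fun m hm ↦ hx m ⟨hm, by simp⟩]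
    exact zero_mem _
  | @insert u S _ _ ih =>
    rw [Set.forall_mem_insert] at hS
    obtain ⟨⟨k, hu⟩, hS⟩ := hS
    have span_le := centroidSpan_mono (F := F) (Set.subset_insert u S)
    obtain hzero | hsurj := hgr.multAnnihilator_apply_eq_zero_or_surjective hsimp hS hu
    · exact span_le <| ih hS fun m hm ↦ hx m (mem_multAnnihilator_insert.2 ⟨hm, hzero m hm⟩)
    · obtain ⟨φ, hφ, hφu⟩ := exists_mem_centroid_forall_apply_eq hsurj hx
      have sub_mem : x - φ u ∈ centroidSpan F S := ih hS fun m hm ↦ by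
        rw [map_sub, apply_apply_of_mem_centroid hφ hm.1, hφu m hm, sub_self]
      rw [← sub_add_cancel x (φ u)]
      exact add_mem (span_le sub_mem) (apply_mem_centroidSpan hφ (Set.mem_insert u S))

lemma IsAlgGrading.exists_mem_multAnnihilator_apply_eq (hgr : IsAlgGrading F 𝒜)
    (hsimp : IsGradedSimple F 𝒜) {S : Set A} (hfin : S.Finite) (hS : ∀ u ∈ S, ∃ g, u ∈ 𝒜 g)
    {x : A} {k : G} (hx : x ∈ 𝒜 k) (hxS : x ∉ centroidSpan F S) (a : A) :
    ∃ m ∈ multAnnihilator F S, m x = a :=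
  (hgr.multAnnihilator_apply_eq_zero_or_surjective hsimp hS hx).resolve_left
    (fun h ↦ hxS (hgr.mem_centroidSpan_of_forall_apply_eq_zero hsimp hfin hS h)) a

lemma IsAlgGrading.interpolates_cons (hgr : IsAlgGrading F 𝒜) (hsimp : IsGradedSimple F 𝒜)
    {n : ℕ} {u : Fin n → A} (hu : ∀ i, ∃ g, u i ∈ 𝒜 g)
    (hM : Interpolates (K := F) (MultAlg F (A := A)) u)
    {x : A} {k : G} (hx : x ∈ 𝒜 k) (hxu : x ∉ centroidSpan F (Set.range u)) :
    Interpolates (K := F) (MultAlg F (A := A)) (Fin.cons x u : Fin (n + 1) → A) := by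
  intro f
  obtain ⟨m, hm, hmu⟩ := hM fun i ↦ f i.succ
  obtain ⟨p, hp, hpx⟩ := hgr.exists_mem_multAnnihilator_apply_eq hsimp (Set.finite_range u)
    (Set.forall_mem_range.2 hu) hx hxu (f 0 - m x)
  refine ⟨m + p, add_mem hm hp.1, Fin.cases ?_ fun i ↦ ?_⟩
  · rw [Fin.cons_zero, LinearMap.add_apply, hpx, add_sub_cancel]
  · rw [Fin.cons_succ, LinearMap.add_apply, hmu, hp.2 _ (Set.mem_range_self i), add_zero]

lemma one_mem_multAlg_of_interpolates {ι : Type*} {u : ι → A}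
    (hM : Interpolates (K := F) (MultAlg F (A := A)) u)
    (hu : centroidSpan F (Set.range u) = ⊤) : 1 ∈ MultAlg F (A := A) := by
  obtain ⟨m, hm, hmu⟩ := hM u
  have m_eq_one : m = 1 := LinearMap.ext fun x ↦
    apply_eq_self_of_mem_centroidSpan hm (Set.forall_mem_range.2 hmu) (hu ▸ trivial)
  exact m_eq_one ▸ hm

theorem IsAlgGrading.one_mem_multAlg (hgr : IsAlgGrading F 𝒜) (hsimp : IsGradedSimple F 𝒜)
    (hPI : SatisfiesOrdinaryPI F (MultAlg F (A := A) : Set (Module.End F A))) :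
    1 ∈ MultAlg F (A := A) := by
  by_contra hone
  have exists_interpolates (n : ℕ) :
      ∃ u : Fin n → A, (∀ i, ∃ g, u i ∈ 𝒜 g) ∧ Interpolates (K := F) (MultAlg F (A := A)) u := by
    induction n with
    | zero => exact ⟨Fin.elim0, fun i ↦ i.elim0, fun _ ↦ ⟨0, zero_mem _, fun i ↦ i.elim0⟩⟩
    | succ n ih =>
      obtain ⟨u, hu, hM⟩ := ih
      obtain ⟨k, x, hx, hxu⟩ : ∃ k, ∃ x ∈ 𝒜 k, x ∉ centroidSpan F (Set.range u) := by
        by_contra! h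
        refine hone (one_mem_multAlg_of_interpolates hM (top_unique ?_))
        exact hgr.1.submodule_iSup_eq_top ▸ iSup_le h
      exact ⟨Fin.cons x u, Fin.cases ⟨k, hx⟩ hu, hgr.interpolates_cons hsimp hu hM hx hxu⟩
  obtain ⟨a, b, hab⟩ := hsimp.1
  have : Nontrivial A := nontrivial_of_ne _ _ hab
  obtain ⟨d, c, hc, hM⟩ :=
    SatisfiesOrdinaryPI.exists_multilinearEval_eq_zero (S := (MultAlg F (A := A)).toSubmodule) hPI
  obtain ⟨u, -, hu⟩ := exists_interpolates (d + 1)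
  exact not_interpolates_of_multilinearEval_eq_zero hc hM u hu

end GradedDensity

section BaseChangeMul

variable {R S B : Type*} [CommSemiring R] [CommSemiring S] [Algebra R S]
  [NonUnitalNonAssocSemiring B] [Module R B] [SMulCommClass R B B] [IsScalarTower R B B]

lemma mul_mem_baseChange {N P Q : Submodule R B} (h : ∀ a ∈ N, ∀ b ∈ P, a * b ∈ Q)
    {x y : S ⊗[R] B} (hx : x ∈ N.baseChange S) (hy : y ∈ P.baseChange S) :
    x * y ∈ Q.baseChange S := by
  obtain ⟨x, rfl⟩ := hx
  obtain ⟨y, rfl⟩ := hy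
  induction x with
  | zero => simp
  | add x x' hx hx' =>
    rw [map_add, add_mul]
    exact add_mem hx hx'
  | tmul c a =>
    induction y with
    | zero => simp
    | add y y' hy hy' =>
      rw [map_add, mul_add]
      exact add_mem hy hy'
    | tmul d b =>
      rw [LinearMap.baseChange_tmul, LinearMap.baseChange_tmul,
        Algebra.TensorProduct.tmul_mul_tmul]
      exact Submodule.tmul_mem_baseChange_of_mem _ (h a a.2 b b.2)

end BaseChangeMul

section BaseChangeEnd

variable {K L U : Type*} [Field K] [Field L] [Algebra K L] [NonUnitalNonAssocRing U] [Module K U]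

lemma basechangeEnd_tmul (c : L) (m : Module.End K U) :
    basechangeEnd K L (c ⊗ₜ[K] m) = c • m.baseChange L := rfl

lemma basechangeEnd_mul (x y : L ⊗[K] Module.End K U) :
    basechangeEnd K L (x * y) = basechangeEnd K L x * basechangeEnd K L y :=
  map_mul (LinearMap.tensorProductEnd K L U) x y

lemma slice_basechangeEnd_one_tmul (ψ : L →ₗ[K] K) (y : L ⊗[K] Module.End K U) (a : U) :
    slice ψ (basechangeEnd K L y (1 ⊗ₜ[K] a)) = slice ψ y a := by
  induction y with
  | zero => simp
  | tmul c m => simp [basechangeEnd_tmul, smul_tmul']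
  | add y z hy hz => simp only [map_add, LinearMap.add_apply, hy, hz]

lemma eq_zero_of_basechangeEnd_eq_zero {y : L ⊗[K] Module.End K U}
    (hy : basechangeEnd K L y = 0) : y = 0 :=
  eq_zero_of_forall_slice_eq_zero fun ψ ↦ LinearMap.ext fun a ↦ by
    rw [← slice_basechangeEnd_one_tmul, hy, LinearMap.zero_apply, map_zero, LinearMap.zero_apply]

lemma map_basechangeEnd_baseChange (N : Submodule K (Module.End K U)) :
    (N.baseChange L).map (basechangeEnd K L) =
      Submodule.span L ((fun m : Module.End K U ↦ m.baseChange L) '' N) := by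
  rw [Submodule.baseChange_eq_span, Submodule.map_span, Submodule.map_coe, Set.image_image]
  simp [basechangeEnd_tmul]

lemma comap_basechangeEnd_eq_baseChange {N : Submodule K (Module.End K U)}
    {P : Submodule L (Module.End L (L ⊗[K] U))} (hN : ∀ m ∈ N, m.baseChange L ∈ P)
    (hP : ∀ y, basechangeEnd K L y ∈ P → ∀ ψ : L →ₗ[K] K, slice ψ y ∈ N) :
    P.comap (basechangeEnd K L) = N.baseChange L := by
  refine le_antisymm (fun y hy ↦ mem_baseChange_iff_forall_slice_mem.2 (hP y hy)) ?_
  rw [← Submodule.map_le_iff_le_comap, map_basechangeEnd_baseChange, Submodule.span_le]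
  exact Set.image_subset_iff.2 hN

lemma map_basechangeEnd_baseChange_inf {N Q : Submodule K (Module.End K U)}
    {P : Submodule L (Module.End L (L ⊗[K] U))}
    (hP : P.comap (basechangeEnd K L) = Q.baseChange L) :
    ((N ⊓ Q).baseChange L).map (basechangeEnd K L) =
      (N.baseChange L).map (basechangeEnd K L) ⊓ P := by
  rw [Submodule.map_inf_eq_map_inf_comap, hP, baseChange_inf]

end BaseChangeEnd

section ScalarExtension

variable {F} {FF} {𝒜 : G → Submodule F A}

lemma baseChange_mulLeft (a : A) :
    (LinearMap.mulLeft F a).baseChange FF = LinearMap.mulLeft FF ((1 : FF) ⊗ₜ[F] a) := by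
  ext x
  simp

lemma baseChange_mulRight (a : A) :
    (LinearMap.mulRight F a).baseChange FF = LinearMap.mulRight FF ((1 : FF) ⊗ₜ[F] a) := by
  ext x
  simp

lemma baseChange_mem_multAlg {m : Module.End F A} (hm : m ∈ MultAlg F (A := A)) :
    m.baseChange FF ∈ MultAlg FF (A := FF ⊗[F] A) := by
  induction hm using NonUnitalAlgebra.adjoin_induction with
  | mem m hm =>
    rcases hm with ⟨a, rfl⟩ | ⟨a, rfl⟩
    · exact baseChange_mulLeft (F := F) (FF := FF) a ▸ mulLeft_mem_multAlg _
    · exact baseChange_mulRight (F := F) (FF := FF) a ▸ mulRight_mem_multAlg _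
  | add m n _ _ hm hn => exact LinearMap.baseChange_add (A := FF) m n ▸ add_mem hm hn
  | zero =>
    rw [LinearMap.baseChange_zero]
    exact zero_mem _
  | mul m n _ _ hm hn => exact LinearMap.baseChange_mul (A := FF) m n ▸ mul_mem hm hn
  | smul c m _ hm =>
    rw [LinearMap.baseChange_smul, ← algebraMap_smul FF c]
    exact SMulMemClass.smul_mem _ hm

theorem map_basechangeEnd_multAlg :
    ((MultAlg F (A := A)).toSubmodule.baseChange FF).map (basechangeEnd F FF) =
      (MultAlg FF (A := FF ⊗[F] A)).toSubmodule := by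
  set N := ((MultAlg F (A := A)).toSubmodule.baseChange FF).map (basechangeEnd F FF) with N_def
  have generators_mem (f : A →ₗ[F] Module.End F A)
      (f' : FF ⊗[F] A →ₗ[FF] Module.End FF (FF ⊗[F] A)) (hfM : ∀ a, f a ∈ MultAlg F (A := A))
      (hf : ∀ a, (f a).baseChange FF = f' (1 ⊗ₜ a)) (z : FF ⊗[F] A) : f' z ∈ N := by
    induction z with
    | zero => exact (map_zero f').symm ▸ N.zero_mem
    | add y z hy hz => exact (map_add f' y z).symm ▸ N.add_mem hy hz
    | tmul c a =>
      refine ⟨c ⊗ₜ f a, Submodule.tmul_mem_baseChange_of_mem c (hfM a), ?_⟩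
      rw [basechangeEnd_tmul, hf, ← map_smul, smul_tmul', smul_eq_mul, mul_one]
  refine le_antisymm ?_ fun m hm ↦ ?_
  · rw [N_def, map_basechangeEnd_baseChange, Submodule.span_le]
    exact Set.image_subset_iff.2 fun m hm ↦ baseChange_mem_multAlg hm
  · replace hm : m ∈ MultAlg FF (A := FF ⊗[F] A) := hm
    induction hm using NonUnitalAlgebra.adjoin_induction with
    | mem m hm =>
      rcases hm with ⟨z, rfl⟩ | ⟨z, rfl⟩
      · exact generators_mem (LinearMap.mul F A) (LinearMap.mul FF _) mulLeft_mem_multAlg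
          baseChange_mulLeft z
      · exact generators_mem (LinearMap.mul F A).flip (LinearMap.mul FF _).flip
          mulRight_mem_multAlg baseChange_mulRight z
    | add m n _ _ hm hn => exact N.add_mem hm hn
    | zero => exact N.zero_mem
    | mul _ _ _ _ hm hn =>
      obtain ⟨y, hy, rfl⟩ := hm
      obtain ⟨z, hz, rfl⟩ := hn
      refine ⟨y * z, ?_, basechangeEnd_mul y z⟩
      exact mul_mem_baseChange (fun _ hm _ hn ↦ (MultAlg F).mul_mem hm hn) hy hz
    | smul c m _ hm => exact N.smul_mem c hm

lemma baseChange_mem_centroid {φ : Module.End F A} (hφ : φ ∈ centroid F (A := A)) :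
    φ.baseChange FF ∈ centroid FF (A := FF ⊗[F] A) := by
  intro y z
  induction y with
  | zero => simp
  | add y y' hy hy' => simp only [add_mul, mul_add, map_add, hy.1, hy.2, hy'.1, hy'.2, and_self]
  | tmul c a =>
    induction z with
    | zero => simp
    | add z z' hz hz' => simp only [add_mul, mul_add, map_add, hz.1, hz.2, hz'.1, hz'.2, and_self]
    | tmul d b => simp [(hφ a b).1, (hφ a b).2]

theorem comap_basechangeEnd_centroid :
    (centroid FF (A := FF ⊗[F] A)).comap (basechangeEnd F FF) =
      (centroid F (A := A)).baseChange FF := by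
  refine comap_basechangeEnd_eq_baseChange (fun φ ↦ baseChange_mem_centroid)
    fun y hy ψ a x ↦ ⟨?_, ?_⟩
  · have := (hy (1 ⊗ₜ a) (1 ⊗ₜ x)).1
    rw [Algebra.TensorProduct.tmul_mul_tmul, one_mul, ← LinearMap.mulLeft_apply FF (1 ⊗ₜ a),
      ← baseChange_mulLeft] at this
    simp only [← slice_basechangeEnd_one_tmul, this, slice_baseChange, LinearMap.mulLeft_apply]
  · have := (hy (1 ⊗ₜ a) (1 ⊗ₜ x)).2
    rw [Algebra.TensorProduct.tmul_mul_tmul, one_mul, ← LinearMap.mulRight_apply FF (1 ⊗ₜ a),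
      ← baseChange_mulRight] at this
    simp only [← slice_basechangeEnd_one_tmul, this, slice_baseChange, LinearMap.mulRight_apply]

lemma multCommutant_eq_centroid : multCommutant F FF = centroid FF (A := FF ⊗[F] A) :=
  Submodule.ext fun _ ↦ mem_centroid_iff_forall_mul_comm.symm

lemma comap_basechangeEnd_endGrading {H : Type*} [CommGroup H] (ℋ : H → Submodule F A) (h : H) :
    (endGrading FF (fun g ↦ (ℋ g).baseChange FF) h).comap (basechangeEnd F FF) =
      (endGrading F ℋ h).baseChange FF := by
  refine comap_basechangeEnd_eq_baseChange (fun m hm g x hx ↦ ?_) fun y hy ψ g a ha ↦ ?_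
  · rw [mem_baseChange_iff_forall_slice_mem] at hx ⊢
    intro ψ
    rw [slice_baseChange]
    exact hm g _ (hx ψ)
  · rw [← slice_basechangeEnd_one_tmul]
    exact mem_baseChange_iff_forall_slice_mem.1
      (hy g _ (Submodule.tmul_mem_baseChange_of_mem 1 ha)) ψ

lemma IsAlgGrading.baseChange (hgr : IsAlgGrading F 𝒜) :
    IsAlgGrading FF (fun g ↦ (𝒜 g).baseChange FF) :=
  ⟨hgr.1.baseChange, fun g h _ hx _ hy ↦ mul_mem_baseChange (hgr.2 g h) hx hy⟩

theorem satisfiesOrdinaryPI_multAlg_baseChange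
    (hPI : SatisfiesOrdinaryPI F (MultAlg F (A := A) : Set (Module.End F A))) :
    SatisfiesOrdinaryPI FF (MultAlg FF (A := FF ⊗[F] A) : Set (Module.End FF (FF ⊗[F] A))) := by
  obtain ⟨d, a, ha, hM⟩ :=
    SatisfiesOrdinaryPI.exists_multilinearEval_eq_zero (S := (MultAlg F (A := A)).toSubmodule) hPI
  refine satisfiesOrdinaryPI_of_multilinearEval_eq_zero (a := algebraMap F FF ∘ a) (by simpa) ?_
  have identity_on_baseChange (y : Fin d → Module.End FF (FF ⊗[F] A))
      (hy : ∀ k, y k ∈ (fun m : Module.End F A ↦ m.baseChange FF) '' (MultAlg F (A := A))) :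
      multilinearEval (algebraMap F FF ∘ a) y = 0 := by
    choose x hxM hx using hy
    obtain rfl : Module.End.baseChangeHom F FF A ∘ x = y := funext hx
    rw [multilinearEval_algebraMap_comp, hM x hxM, map_zero]
  intro y hy
  refine map_eq_zero_of_mem_span identity_on_baseChange fun k ↦ ?_
  have : y k ∈ (MultAlg FF (A := FF ⊗[F] A)).toSubmodule := hy k
  rwa [← map_basechangeEnd_multAlg, map_basechangeEnd_baseChange] at this

lemma IsAlgGrading.componentProj_mem_span (hgr : IsAlgGrading F 𝒜)
    (hbase : centroid F (A := A) ⊓ endGrading F 𝒜 1 ≤ Submodule.span F {1}) {S : Set A} {g : G}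
    (hS : S ⊆ 𝒜 g) {x : A} (hx : x ∈ centroidSpan F S) :
    componentProj hgr.1 g x ∈ Submodule.span F S := by
  have span_le : centroidSpan F S ≤ (Submodule.span F S).comap (componentProj hgr.1 g) := by
    refine Submodule.span_le.2 (Set.image2_subset_iff.2 fun φ hφ u hu ↦ ?_)
    obtain ⟨c, hc⟩ := Submodule.mem_span_singleton.1
      (hbase ⟨hgr.homogComponent_mem_centroid 1 hφ, homogComponent_mem_endGrading hgr.1 1 φ⟩)
    have proj_eq : componentProj hgr.1 g (φ u) = c • u := by
      have := homogComponent_apply_of_mem hgr.1 1 φ (hS hu)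
      rw [one_mul, ← hc] at this
      exact this.symm
    rw [SetLike.mem_coe, Submodule.mem_comap, proj_eq]
    exact Submodule.smul_mem _ c (Submodule.subset_span hu)
  exact span_le hx

lemma IsAlgGrading.eq_top_of_mem_baseChange (hgr : IsAlgGrading F 𝒜) (hsimp : IsGradedSimple F 𝒜)
    (hbase : centroid F (A := A) ⊓ endGrading F 𝒜 1 ≤ Submodule.span F {1})
    {I : Submodule FF (FF ⊗[F] A)} (hI : IsMulIdeal FF I) {z : FF ⊗[F] A} (hzI : z ∈ I) {g : G}
    (hzg : z ∈ (𝒜 g).baseChange FF) (hz : z ≠ 0) : I = ⊤ := by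
  obtain ⟨c, x, S, hc, hx, hfin, hS, hxS, hzx⟩ := exists_sub_tmul_mem_baseChange_span hzg hz
  have x_notMem : x ∉ centroidSpan F S := fun h ↦
    hxS (componentProj_of_mem hgr.1 hx ▸ hgr.componentProj_mem_span hbase hS h)
  have tmul_mem (a : A) : c ⊗ₜ[F] a ∈ I := by
    obtain ⟨m, hm, rfl⟩ := hgr.exists_mem_multAnnihilator_apply_eq hsimp hfin
      (fun u hu ↦ ⟨g, hS hu⟩) hx x_notMem a
    have span_le_ker : (Submodule.span F S).baseChange FF ≤ LinearMap.ker (m.baseChange FF) := by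
      intro w hw
      refine eq_zero_of_forall_slice_eq_zero fun ψ ↦ ?_
      rw [slice_baseChange]
      exact Submodule.span_le (p := LinearMap.ker m).2 hm.2
        (mem_baseChange_iff_forall_slice_mem.1 hw ψ)
    have apply_eq : m.baseChange FF z = c ⊗ₜ m x := by
      rw [← LinearMap.baseChange_tmul]
      exact sub_eq_zero.1 ((map_sub _ _ _).symm.trans (span_le_ker hzx))
    exact apply_eq ▸ hI.apply_mem (baseChange_mem_multAlg hm.1) hzI
  refine top_unique fun w _ ↦ ?_
  induction w with
  | zero => exact I.zero_mem
  | add w w' hw hw' => exact I.add_mem (hw trivial) (hw' trivial)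
  | tmul d a => simpa [smul_tmul', hc] using I.smul_mem (d * c⁻¹) (tmul_mem a)

theorem IsAlgGrading.isGradedSimple_baseChange (hgr : IsAlgGrading F 𝒜)
    (hsimp : IsGradedSimple F 𝒜)
    (hbase : centroid F (A := A) ⊓ endGrading F 𝒜 1 ≤ Submodule.span F {1}) :
    IsGradedSimple FF (fun g ↦ (𝒜 g).baseChange FF) := by
  refine ⟨?_, fun I hI hhomog ↦ or_iff_not_imp_left.2 fun hbot ↦ ?_⟩
  · obtain ⟨a, b, hab⟩ := hsimp.1
    refine ⟨1 ⊗ₜ a, 1 ⊗ₜ b, fun h ↦ hab ?_⟩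
    rw [Algebra.TensorProduct.tmul_mul_tmul, one_mul] at h
    exact Module.Flat.tensorProduct_mk_injective F A FF (h.trans (tmul_zero A 1).symm)
  · obtain ⟨g, hg⟩ : ∃ g, I ⊓ (𝒜 g).baseChange FF ≠ ⊥ := by
      by_contra! h
      exact hbot (hhomog.trans (iSup_eq_bot.2 h))
    obtain ⟨z, ⟨hzI, hzg⟩, hz⟩ := Submodule.exists_mem_ne_zero_of_ne_bot hg
    exact hgr.eq_top_of_mem_baseChange hsimp hbase hI hzI hzg hz

end ScalarExtension

/-- Let `U` be a `G`-graded simple algebra (`G` abelian) whose multiplication algebra satisfies an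
ordinary polynomial identity, over the field `F = Γ(U)_e`.  For any field extension `FF` of `F`,
the algebra `Ũ = FF ⊗ U` is graded simple, `M(Ũ)` satisfies an ordinary polynomial identity,
`FF ⊗ M(U) ≅ M(Ũ)` as graded algebras via the base-change map, and the center of `M(Ũ)` is
isomorphic as a graded algebra to `FF ⊗ Γ(U)` via the same map. -/
theorem scalar_extension_of_graded_simple
    (𝒜 : G → Submodule F A) (hgr : IsAlgGrading F 𝒜) (hsimp : IsGradedSimple F 𝒜)
    (hPI : SatisfiesOrdinaryPI F (MultAlg F (A := A) : Set (Module.End F A)))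
    (hbase : ∀ φ : Module.End F A,
      φ ∈ centroid F (A := A) ⊓ endGrading F 𝒜 1 ↔ ∃ c : F, φ = c • (1 : Module.End F A)) :
    -- `Ũ` is a graded simple `FF`-algebra
    (IsAlgGrading FF (fun g => (𝒜 g).baseChange FF) ∧
      IsGradedSimple FF (fun g => (𝒜 g).baseChange FF)) ∧
    -- `M(Ũ)` satisfies an ordinary polynomial identity
    SatisfiesOrdinaryPI FF
      (MultAlg FF (A := FF ⊗[F] A) : Set (Module.End FF (FF ⊗[F] A))) ∧
    -- the base-change map `FF ⊗ M(U) → M(Ũ)` is an isomorphism of graded algebras: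
    (∀ x y : FF ⊗[F] Module.End F A,
        basechangeEnd F FF (x * y) = basechangeEnd F FF x * basechangeEnd F FF y) ∧
    (∀ x ∈ ((MultAlg F (A := A)).toSubmodule).baseChange FF,
        basechangeEnd F FF x = 0 → x = 0) ∧
    (Submodule.map (basechangeEnd F FF) (((MultAlg F (A := A)).toSubmodule).baseChange FF) =
        (MultAlg FF (A := FF ⊗[F] A)).toSubmodule) ∧
    (∀ h : G, Submodule.map (basechangeEnd F FF)
        (((MultAlg F (A := A)).toSubmodule ⊓ endGrading F 𝒜 h).baseChange FF) =
        (MultAlg FF (A := FF ⊗[F] A)).toSubmodule ⊓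
          endGrading FF (fun g => (𝒜 g).baseChange FF) h) ∧
    -- and it maps `FF ⊗ Γ(U)` isomorphically (as graded algebras) onto the center of `M(Ũ)`
    (Submodule.map (basechangeEnd F FF) ((gradedCentroid F 𝒜).baseChange FF) =
        (MultAlg FF (A := FF ⊗[F] A)).toSubmodule ⊓ multCommutant F FF) ∧
    (∀ h : G, Submodule.map (basechangeEnd F FF)
        ((centroid F (A := A) ⊓ endGrading F 𝒜 h).baseChange FF) =
        (MultAlg FF (A := FF ⊗[F] A)).toSubmodule ⊓ multCommutant F FF ⊓
          endGrading FF (fun g => (𝒜 g).baseChange FF) h) := by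
  have hle := centroid_le_multAlg_of_one_mem (hgr.one_mem_multAlg hsimp hPI)
  have hscalar : centroid F (A := A) ⊓ endGrading F 𝒜 1 ≤ Submodule.span F {1} := fun φ hφ ↦
    let ⟨c, hc⟩ := (hbase φ).1 hφ
    Submodule.mem_span_singleton.2 ⟨c, hc.symm⟩
  have map_centroid : ((centroid F (A := A)).baseChange FF).map (basechangeEnd F FF) =
      (MultAlg FF (A := FF ⊗[F] A)).toSubmodule ⊓ multCommutant F FF := by
    rw [multCommutant_eq_centroid, ← map_basechangeEnd_multAlg,
      ← map_basechangeEnd_baseChange_inf comap_basechangeEnd_centroid, inf_eq_right.2 hle]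
  refine ⟨⟨hgr.baseChange, hgr.isGradedSimple_baseChange hsimp hscalar⟩,
    satisfiesOrdinaryPI_multAlg_baseChange hPI, basechangeEnd_mul,
    fun x _ ↦ eq_zero_of_basechangeEnd_eq_zero, map_basechangeEnd_multAlg, fun h ↦ ?_, ?_,
    fun h ↦ ?_⟩
  · rw [map_basechangeEnd_baseChange_inf (comap_basechangeEnd_endGrading 𝒜 h),
      map_basechangeEnd_multAlg]
  · rw [hgr.gradedCentroid_eq_centroid hle, map_centroid]
  · rw [map_basechangeEnd_baseChange_inf (comap_basechangeEnd_endGrading 𝒜 h), map_centroid]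

end
end

section
/- With the generic-elements setup (G abelian, U a G-graded simple algebra finite-dimensional over F = Γ(U)_e, F_U the algebra of generic elements inside Ũ = F̃ ⊗_F U): the F-algebra Z_U = Z(M(F_U))_e is isomorphic as an F-algebra to an F-subalgebra of the field F̃; in particular Z_U is a commutative integral domain. -/
noncomputable section

open TensorProduct

variable (F : Type*) [Field F] {G : Type*} [CommGroup G] [DecidableEq G]
variable (FF : Type*) [Field FF] [Algebra F FF] [Algebra (MvPolynomial (G × ℕ × ℕ) F) FF]
  [IsScalarTower F (MvPolynomial (G × ℕ × ℕ) F) FF]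
variable {A : Type*} [NonUnitalNonAssocRing A] [Module F A] [SMulCommClass F A A]
  [IsScalarTower F A A]

/-- the set of generic elements `y_i^g = ∑_j t_{ij}^g ⊗ u_j^g` of `Ũ = FF ⊗ U`,
relative to the choice of bases `bU g` of the homogeneous components. -/
def genericElems (𝒜 : G → Submodule F A) (nU : G → ℕ)
    (bU : ∀ g : G, Module.Basis (Fin (nU g)) F (𝒜 g)) : Set (FF ⊗[F] A) :=
  {x | ∃ (g : G) (i : Fin (nU g)), x = ∑ j : Fin (nU g),
    (algebraMap (MvPolynomial (G × ℕ × ℕ) F) FF (MvPolynomial.X (g, (i : ℕ), (j : ℕ)))) ⊗ₜ[F]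
      ((bU g j : A))}

/-- the algebra of generic elements `F_U`, an `F`-subalgebra of `Ũ = FF ⊗ U`. -/
def genericAlg (𝒜 : G → Submodule F A) (nU : G → ℕ)
    (bU : ∀ g : G, Module.Basis (Fin (nU g)) F (𝒜 g)) : NonUnitalSubalgebra F (FF ⊗[F] A) :=
  NonUnitalAlgebra.adjoin F (genericElems F FF 𝒜 nU bU)

/-- the degree-`g` component of an `F`-subalgebra `L` of `Ũ = FF ⊗ U`, induced by the grading
of `Ũ`. -/
def subComp (𝒜 : G → Submodule F A) (L : NonUnitalSubalgebra F (FF ⊗[F] A)) (g : G) :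
    Submodule F ↥L where
  carrier := {x | (x : FF ⊗[F] A) ∈ (𝒜 g).baseChange FF}
  add_mem' := fun {x y} hx hy => by
    simpa using (((𝒜 g).baseChange FF).restrictScalars F).add_mem hx hy
  zero_mem' := by simp
  smul_mem' := fun c x hx => by
    simpa using (((𝒜 g).baseChange FF).restrictScalars F).smul_mem c hx

/-- the degree-`e` component `Z(M(F_U))_e` of the center of the multiplication algebra of an
`F`-subalgebra `L` of `Ũ` (applied below to `L = F_U` and to its central localization). -/
def centerMultE (𝒜 : G → Submodule F A) (L : NonUnitalSubalgebra F (FF ⊗[F] A)) :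
    Set (Module.End F ↥L) :=
  {m | m ∈ MultAlg F (A := ↥L) ∧ (∀ m' ∈ MultAlg F (A := ↥L), m * m' = m' * m) ∧
    m ∈ endGrading F (subComp F FF 𝒜 L) 1}

end

/-!
An element `m` of `Z(M(F_U))_e` is built from multiplications by elements of `F_U`, so it extends
to an `F̃`-linear endomorphism of `Ũ`. The determinant of the matrix of indeterminates `t_{ij}^g`
is nonzero, hence the generic elements of degree `g` span `Ũ_g` over `F̃`, and therefore the
extension of `m` lies in `Γ(Ũ)_e`. Contracting `F̃ ⊗ U → U` along the functionals of `F̃` reduces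
`Γ(Ũ)_e = F̃` to `Γ(U)_e = F`. So `m` is multiplication by a scalar of `F̃`, and this scalar is its
image in `F̃`.
-/

open TensorProduct

section DualContraction

variable {R M N P : Type*} [CommSemiring R] [AddCommMonoid M] [Module R M]
  [AddCommMonoid N] [Module R N] [AddCommMonoid P] [Module R P]

/-- The contraction `π ⊗ id : M ⊗ N → N` of the left tensor factor along a functional `π` on `M`;
it carries statements about `M ⊗ N` over to `N`. -/
noncomputable def dualContraction (π : Module.Dual R M) : M ⊗[R] N →ₗ[R] N :=
  (TensorProduct.lid R N).toLinearMap ∘ₗ π.rTensor N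

theorem dualContraction_tmul (π : Module.Dual R M) (m : M) (n : N) :
    dualContraction π (m ⊗ₜ[R] n) = π m • n := by
  simp [dualContraction]

theorem dualContraction_lTensor (π : Module.Dual R M) (f : N →ₗ[R] P) (z : M ⊗[R] N) :
    dualContraction π (f.lTensor M z) = f (dualContraction π z) := by
  induction z with
  | zero => simp
  | tmul m n => simp [dualContraction_tmul]
  | add z w hz hw => simp only [map_add, hz, hw]

theorem dualContraction_eq_apply_rid (π : Module.Dual R M) (z : M ⊗[R] R) :
    dualContraction π z = π (TensorProduct.rid R M z) := by
  induction z with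
  | zero => simp
  | tmul m r => simp [dualContraction_tmul, mul_comm]
  | add z w hz hw => simp only [map_add, hz, hw]

theorem eq_of_forall_dualContraction_eq [Module.Free R M] {z w : M ⊗[R] N}
    (h : ∀ π : Module.Dual R M, dualContraction π z = dualContraction π w) : z = w := by
  let b := Module.Free.chooseBasis R M
  refine (TensorProduct.equivFinsuppOfBasisLeft b).injective (Finsupp.ext fun i => ?_)
  rw [TensorProduct.equivFinsuppOfBasisLeft_apply, TensorProduct.equivFinsuppOfBasisLeft_apply]
  exact h (b.coord i)

end DualContraction

section BaseChange

variable {R S M : Type*} [CommSemiring R] [CommSemiring S] [Algebra R S] [AddCommMonoid M]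
  [Module R M]

theorem dualContraction_mem_of_mem_baseChange (π : Module.Dual R S) {p : Submodule R M}
    {z : S ⊗[R] M} (hz : z ∈ p.baseChange S) : dualContraction π z ∈ p := by
  obtain ⟨w, rfl⟩ := hz
  exact dualContraction_lTensor π p.subtype w ▸ (dualContraction π w).2

theorem iSup_baseChange_eq_top {ι : Sort*} {p : ι → Submodule R M} (hp : ⨆ i, p i = ⊤) :
    ⨆ i, (p i).baseChange S = ⊤ := by
  rw [eq_top_iff, ← Submodule.baseChange_top, ← hp, Submodule.baseChange_eq_span,
    Submodule.span_le]
  change _ ≤ (⨆ i, (p i).baseChange S).restrictScalars R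
  rw [Submodule.map_le_iff_le_comap]
  exact iSup_le fun i a ha =>
    Submodule.mem_iSup_of_mem i (Submodule.tmul_mem_baseChange_of_mem 1 ha)

theorem baseChange_eq_span_range_basis {ι : Type*} {p : Submodule R M} (b : Module.Basis ι R p) :
    p.baseChange S = Submodule.span S (Set.range fun i => (1 : S) ⊗ₜ[R] (b i : M)) := by
  have span_range_b : Submodule.span R (Set.range fun i => (b i : M)) = p := by
    rw [Set.range_comp' Subtype.val b, ← Submodule.coe_subtype, ← Submodule.map_span, b.span_eq,
      Submodule.map_subtype_top]
  conv_lhs => rw [← span_range_b, Submodule.baseChange_span, ← Set.range_comp]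
  rfl

end BaseChange

section GradedCentral

/-- `A` is graded-central over `K`: the degree-`e` component of its centroid consists of scalars,
i.e. `Γ(A)_e = K`. -/
def IsGradedCentral (K : Type*) [Field K] {G : Type*} [CommGroup G] {A : Type*}
    [NonUnitalNonAssocSemiring A] [Module K A] [SMulCommClass K A A] [IsScalarTower K A A]
    (𝒜 : G → Submodule K A) : Prop :=
  ∀ φ ∈ centroid K (A := A) ⊓ endGrading K 𝒜 1, ∃ c : K, φ = c • (1 : Module.End K A)

variable {F E A : Type*} [Field F] [Field E] [Algebra F E] [NonUnitalNonAssocRing A]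
  [Module F A] [SMulCommClass F A A] [IsScalarTower F A A]

theorem one_tmul_mul_eq_lTensor_mulLeft (a : A) (z : E ⊗[F] A) :
    ((1 : E) ⊗ₜ[F] a) * z = (LinearMap.mulLeft F a).lTensor E z := by
  induction z with
  | zero => simp
  | tmul c x => simp
  | add z w hz hw => simp only [mul_add, map_add, hz, hw]

theorem mul_one_tmul_eq_lTensor_mulRight (a : A) (z : E ⊗[F] A) :
    z * ((1 : E) ⊗ₜ[F] a) = (LinearMap.mulRight F a).lTensor E z := by
  induction z with
  | zero => simp
  | tmul c x => simp
  | add z w hz hw => simp only [add_mul, map_add, hz, hw]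

theorem dualContraction_comp_mem_centroid {φ : Module.End E (E ⊗[F] A)}
    (hφ : φ ∈ centroid E (A := E ⊗[F] A)) (π : Module.Dual F E) :
    dualContraction π ∘ₗ φ.restrictScalars F ∘ₗ TensorProduct.mk F E A 1 ∈ centroid F (A := A) := by
  intro a x
  have one_tmul_mul (a b : A) : (1 : E) ⊗ₜ[F] (a * b) = (1 ⊗ₜ a) * (1 ⊗ₜ b) := by simp
  simp only [LinearMap.comp_apply, LinearMap.restrictScalars_apply, TensorProduct.mk_apply,
    one_tmul_mul, (hφ (1 ⊗ₜ a) (1 ⊗ₜ x)).1, (hφ (1 ⊗ₜ a) (1 ⊗ₜ x)).2]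
  rw [one_tmul_mul_eq_lTensor_mulLeft, mul_one_tmul_eq_lTensor_mulRight, dualContraction_lTensor,
    dualContraction_lTensor]
  exact ⟨rfl, rfl⟩

variable {G : Type*} [CommGroup G] {𝒜 : G → Submodule F A}

theorem dualContraction_comp_mem_endGrading {φ : Module.End E (E ⊗[F] A)} {h : G}
    (hφ : φ ∈ endGrading E (fun g => (𝒜 g).baseChange E) h) (π : Module.Dual F E) :
    dualContraction π ∘ₗ φ.restrictScalars F ∘ₗ TensorProduct.mk F E A 1 ∈ endGrading F 𝒜 h :=
  fun g _ ha => dualContraction_mem_of_mem_baseChange π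
    (hφ g _ (Submodule.tmul_mem_baseChange_of_mem 1 ha))

theorem IsGradedCentral.baseChange [Nontrivial A] (h𝒜 : IsGradedCentral F 𝒜) :
    IsGradedCentral E fun g => (𝒜 g).baseChange E := by
  rintro φ ⟨hφ_centroid, hφ_degree⟩
  have contraction_scalar (π : Module.Dual F E) :
      ∃ c : F, ∀ a : A, dualContraction π (φ (1 ⊗ₜ a)) = c • a := by
    obtain ⟨c, hc⟩ := h𝒜 _ ⟨dualContraction_comp_mem_centroid hφ_centroid π,
      dualContraction_comp_mem_endGrading hφ_degree π⟩
    exact ⟨c, LinearMap.congr_fun hc⟩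
  obtain ⟨a₀, ha₀⟩ := exists_ne (0 : A)
  obtain ⟨f, hf⟩ := Module.Projective.exists_dual_eq_one F ha₀
  let c : E := TensorProduct.rid F E (f.lTensor E (φ (1 ⊗ₜ a₀)))
  have apply_one_tmul (a : A) : φ (1 ⊗ₜ a) = c • (1 ⊗ₜ[F] a) := by
    refine eq_of_forall_dualContraction_eq fun π => ?_
    obtain ⟨d, hd⟩ := contraction_scalar π
    have apply_c : π c = d := by
      rw [← dualContraction_eq_apply_rid, dualContraction_lTensor, hd, map_smul, hf, smul_eq_mul,
        mul_one]
    rw [hd, TensorProduct.smul_tmul', dualContraction_tmul, smul_eq_mul, mul_one, apply_c]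
  exact ⟨c, TensorProduct.AlgebraTensorModule.curry_injective <| by ext a; simp [apply_one_tmul]⟩

end GradedCentral

section Centroid

variable {K A : Type*} [Field K] [NonUnitalNonAssocSemiring A] [Module K A]
  [SMulCommClass K A A] [IsScalarTower K A A]

theorem mem_centroid_of_forall_multAlg_commute {m : Module.End K A}
    (hm : ∀ m' ∈ MultAlg K (A := A), m * m' = m' * m) : m ∈ centroid K (A := A) := fun a x =>
  ⟨LinearMap.congr_fun (hm _ (NonUnitalAlgebra.subset_adjoin K (.inl ⟨a, rfl⟩))) x,
    LinearMap.congr_fun (hm _ (NonUnitalAlgebra.subset_adjoin K (.inr ⟨a, rfl⟩))) x⟩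

end Centroid

section Extension

variable {F E B : Type*} [Field F] [Field E] [NonUnitalNonAssocRing B]
  [Module F B] [SMulCommClass F B B] [IsScalarTower F B B]
  [Module E B] [SMulCommClass E B B] [IsScalarTower E B B]
  {L : NonUnitalSubalgebra F B} {m : Module.End F L} {φ : Module.End E B}

theorem exists_extension_of_mem_multAlg [Algebra F E] [IsScalarTower F E B]
    (hm : m ∈ MultAlg F (A := L)) : ∃ φ : Module.End E B, ∀ x : L, φ x = m x := by
  unfold MultAlg at hm
  induction hm using NonUnitalAlgebra.adjoin_induction with
  | mem m hm =>
    rcases hm with ⟨a, rfl⟩ | ⟨a, rfl⟩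
    · exact ⟨LinearMap.mulLeft E (a : B), fun _ => rfl⟩
    · exact ⟨LinearMap.mulRight E (a : B), fun _ => rfl⟩
  | zero => exact ⟨0, fun _ => rfl⟩
  | add m n _ _ hm hn =>
    obtain ⟨φ, hφ⟩ := hm
    obtain ⟨ψ, hψ⟩ := hn
    exact ⟨φ + ψ, fun x => by simp [hφ, hψ]⟩
  | mul m n _ _ hm hn =>
    obtain ⟨φ, hφ⟩ := hm
    obtain ⟨ψ, hψ⟩ := hn
    exact ⟨φ * ψ, fun x => by simp [hφ, hψ]⟩
  | smul r m _ hm =>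
    obtain ⟨φ, hφ⟩ := hm
    exact ⟨algebraMap F E r • φ, fun x => by simp [hφ]⟩

theorem mem_centroid_of_extends (hL : Submodule.span E (L : Set B) = ⊤)
    (hm : m ∈ centroid F (A := L)) (hφ : ∀ x : L, φ x = m x) : φ ∈ centroid E (A := B) := by
  have apply_mul {a x : B} (ha : a ∈ L) (hx : x ∈ L) :
      φ (a * x) = a * φ x ∧ φ (a * x) = φ a * x := by
    have apply_coe_mul := hφ (⟨a, ha⟩ * ⟨x, hx⟩)
    exact ⟨apply_coe_mul.trans (by rw [(hm _ _).1, hφ ⟨x, hx⟩]; rfl),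
      apply_coe_mul.trans (by rw [(hm _ _).2, hφ ⟨a, ha⟩]; rfl)⟩
  have left_linear : (LinearMap.mul E B).compr₂ φ = (LinearMap.mul E B).compl₂ φ :=
    LinearMap.ext_on hL fun _ ha => LinearMap.ext_on hL fun _ hx => (apply_mul ha hx).1
  have right_linear : (LinearMap.mul E B).compr₂ φ = LinearMap.mul E B ∘ₗ φ :=
    LinearMap.ext_on hL fun _ ha => LinearMap.ext_on hL fun _ hx => (apply_mul ha hx).2
  exact fun a x => ⟨LinearMap.congr_fun₂ left_linear a x, LinearMap.congr_fun₂ right_linear x a⟩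

end Extension

section GradedSpanning

variable {F E : Type*} [Field F] [Field E] [Algebra F E] {G : Type*}
  {A : Type*} [NonUnitalNonAssocRing A] [Module F A] [SMulCommClass F A A] [IsScalarTower F A A]

/-- Each component `E ⊗ 𝒜 g` of `E ⊗ A` is spanned over `E` by the elements of degree `g` of the
`F`-subalgebra `L`; the property of the algebra of generic elements on which the description of
`Z(M(L))_e` rests. -/
def IsGradedSpanning (𝒜 : G → Submodule F A) (L : NonUnitalSubalgebra F (E ⊗[F] A)) : Prop :=
  ∀ g, (𝒜 g).baseChange E ≤ Submodule.span E {x | x ∈ L ∧ x ∈ (𝒜 g).baseChange E}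

variable {𝒜 : G → Submodule F A} {L : NonUnitalSubalgebra F (E ⊗[F] A)}

theorem IsGradedSpanning.span_eq_top (hL : IsGradedSpanning 𝒜 L) (h𝒜 : ⨆ g, 𝒜 g = ⊤) :
    Submodule.span E (L : Set (E ⊗[F] A)) = ⊤ := by
  rw [eq_top_iff, ← iSup_baseChange_eq_top h𝒜]
  exact iSup_le fun g => (hL g).trans (Submodule.span_mono fun _ hx => hx.1)

theorem IsGradedSpanning.nontrivial [Nontrivial A] (hL : IsGradedSpanning 𝒜 L)
    (h𝒜 : ⨆ g, 𝒜 g = ⊤) : Nontrivial L := by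
  by_contra hL_trivial
  have eq_zero (x : E ⊗[F] A) (hx : x ∈ L) : x = 0 :=
    congrArg Subtype.val (not_nontrivial_iff_subsingleton.1 hL_trivial |>.elim ⟨x, hx⟩ 0)
  exact bot_ne_top (α := Submodule E (E ⊗[F] A))
    ((Submodule.span_eq_bot.2 eq_zero).symm.trans (hL.span_eq_top h𝒜))

theorem IsGradedSpanning.mem_endGrading_of_extends [CommGroup G] (hL : IsGradedSpanning 𝒜 L)
    {h : G} {m : Module.End F L} (hm : m ∈ endGrading F (subComp F E 𝒜 L) h)
    {φ : Module.End E (E ⊗[F] A)} (hφ : ∀ x : L, φ x = m x) :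
    φ ∈ endGrading E (fun g => (𝒜 g).baseChange E) h := by
  intro g
  suffices (𝒜 g).baseChange E ≤ ((𝒜 (h * g)).baseChange E).comap φ from this
  refine (hL g).trans (Submodule.span_le.2 fun x hx => ?_)
  rw [SetLike.mem_coe, Submodule.mem_comap, hφ ⟨x, hx.1⟩]
  exact hm g ⟨x, hx.1⟩ hx.2

end GradedSpanning

section ScalarAction

variable {F E B : Type*} [Field F] [Field E] [NonUnitalNonAssocRing B] [Module F B] [Module E B]

/-- The endomorphism `m` of `L` is the restriction of multiplication by the scalar `c`, which need
not itself lie in the ground field of `L`. -/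
def ActsAsScalar {L : NonUnitalSubalgebra F B} (m : Module.End F L) (c : E) : Prop :=
  ∀ x : L, (m x : B) = c • (x : B)

variable {L : NonUnitalSubalgebra F B} {m n : Module.End F L} {c d : E}

theorem ActsAsScalar.eq (hm : ActsAsScalar m c) (hn : ActsAsScalar n c) : m = n :=
  LinearMap.ext fun x => Subtype.ext ((hm x).trans (hn x).symm)

theorem ActsAsScalar.eq_zero (hm : ActsAsScalar m (0 : E)) : m = 0 :=
  hm.eq fun _ => (zero_smul E _).symm

theorem ActsAsScalar.mul (hm : ActsAsScalar m c) (hn : ActsAsScalar n d) :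
    ActsAsScalar (m * n) (c * d) := fun x => by
  rw [Module.End.mul_apply, hm, hn, mul_smul]

-- `θ m` is read off from the value of `m` at a single nonzero vector of `L`.
theorem exists_linearMap_eq_of_actsAsScalar [Algebra F E] [IsScalarTower F E B] [Nontrivial L] :
    ∃ θ : Module.End F L →ₗ[F] E, ∀ (m : Module.End F L) (c : E), ActsAsScalar m c → θ m = c := by
  obtain ⟨x₀, hx₀⟩ := exists_ne (0 : L)
  have coe_x₀_ne_zero : (x₀ : B) ≠ 0 := fun h => hx₀ (Subtype.ext h)
  obtain ⟨f, hf⟩ := Module.Projective.exists_dual_eq_one E coe_x₀_ne_zero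
  refine ⟨f.restrictScalars F ∘ₗ L.toSubmodule.subtype ∘ₗ LinearMap.applyₗ x₀, fun m c hm => ?_⟩
  change f (m x₀) = c
  rw [hm, map_smul, hf, smul_eq_mul, mul_one]

end ScalarAction

section Center

variable {F FF : Type*} [Field F] [Field FF] [Algebra F FF] {G : Type*} [CommGroup G]
  {A : Type*} [NonUnitalNonAssocRing A] [Module F A] [SMulCommClass F A A] [IsScalarTower F A A]
  [Nontrivial A] {𝒜 : G → Submodule F A} {L : NonUnitalSubalgebra F (FF ⊗[F] A)}

theorem exists_actsAsScalar_of_mem_centerMultE (h𝒜 : ⨆ g, 𝒜 g = ⊤)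
    (hcentral : IsGradedCentral F 𝒜) (hL : IsGradedSpanning 𝒜 L) {m : Module.End F L}
    (hm : m ∈ centerMultE F FF 𝒜 L) : ∃ c : FF, ActsAsScalar m c := by
  obtain ⟨hm_mult, hm_comm, hm_degree⟩ := hm
  obtain ⟨φ, hφ⟩ := exists_extension_of_mem_multAlg (E := FF) hm_mult
  have φ_centroid := mem_centroid_of_extends (hL.span_eq_top h𝒜)
    (mem_centroid_of_forall_multAlg_commute hm_comm) hφ
  obtain ⟨c, rfl⟩ :=
    hcentral.baseChange φ ⟨φ_centroid, hL.mem_endGrading_of_extends hm_degree hφ⟩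
  exact ⟨c, fun x => (hφ x).symm⟩

theorem center_of_generic_mult_algebra_embeds_in_field_general (h𝒜 : ⨆ g, 𝒜 g = ⊤)
    (hcentral : IsGradedCentral F 𝒜) (hL : IsGradedSpanning 𝒜 L) :
    ∃ θ : Module.End F L → FF,
      Set.InjOn θ (centerMultE F FF 𝒜 L) ∧
      θ 0 = 0 ∧
      (∀ x ∈ centerMultE F FF 𝒜 L, ∀ y ∈ centerMultE F FF 𝒜 L,
          θ (x + y) = θ x + θ y ∧ θ (x * y) = θ x * θ y) ∧
      (∀ c : F, ∀ x ∈ centerMultE F FF 𝒜 L, θ (c • x) = algebraMap F FF c * θ x) ∧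
      (∀ x ∈ centerMultE F FF 𝒜 L, ∀ y ∈ centerMultE F FF 𝒜 L, x * y = y * x) ∧
      (∀ x ∈ centerMultE F FF 𝒜 L, ∀ y ∈ centerMultE F FF 𝒜 L, x * y = 0 → x = 0 ∨ y = 0) := by
  have := hL.nontrivial h𝒜
  obtain ⟨θ, hθ⟩ := exists_linearMap_eq_of_actsAsScalar (E := FF) (L := L)
  have actsAsScalar_θ {m} (hm : m ∈ centerMultE F FF 𝒜 L) : ActsAsScalar m (θ m) := by
    obtain ⟨c, hc⟩ := exists_actsAsScalar_of_mem_centerMultE h𝒜 hcentral hL hm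
    exact hθ m c hc ▸ hc
  have θ_mul {x y} (hx : x ∈ centerMultE F FF 𝒜 L) (hy : y ∈ centerMultE F FF 𝒜 L) :
      θ (x * y) = θ x * θ y :=
    hθ _ _ ((actsAsScalar_θ hx).mul (actsAsScalar_θ hy))
  have eq_zero_of_θ_eq_zero {x} (hx : x ∈ centerMultE F FF 𝒜 L) (h : θ x = 0) : x = 0 :=
    (h ▸ actsAsScalar_θ hx).eq_zero
  refine ⟨θ, fun x hx y hy h => (h ▸ actsAsScalar_θ hx).eq (actsAsScalar_θ hy), map_zero θ,
    fun x hx y hy => ⟨map_add θ x y, θ_mul hx hy⟩,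
    fun c x _ => (map_smul θ c x).trans (Algebra.smul_def c (θ x)),
    fun x hx y hy => hx.2.1 y hy.1, fun x hx y hy hxy => ?_⟩
  exact (mul_eq_zero.1 ((θ_mul hx hy).symm.trans (hxy ▸ map_zero θ))).imp
    (eq_zero_of_θ_eq_zero hx) (eq_zero_of_θ_eq_zero hy)

end Center

theorem IsGradedSimple.nontrivial {K G A : Type*} [Field K] [NonUnitalNonAssocSemiring A]
    [Module K A] {𝒜 : G → Submodule K A} (h : IsGradedSimple K 𝒜) : Nontrivial A :=
  let ⟨a, b, hab⟩ := h.1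
  nontrivial_of_ne (a * b) 0 hab

section GenericElements

theorem span_range_le_span_range_sum_smul {ι K V : Type*} [Fintype ι] [DecidableEq ι] [CommRing K]
    [AddCommGroup V] [Module K V] {M : Matrix ι ι K} (hM : IsUnit M.det) (v : ι → V) :
    Submodule.span K (Set.range v) ≤
      Submodule.span K (Set.range fun i => ∑ j, M i j • v j) := by
  rw [Submodule.span_le]
  rintro _ ⟨k, rfl⟩
  have v_eq : v k = ∑ i, M⁻¹ k i • ∑ j, M i j • v j := by
    simp_rw [Finset.smul_sum, smul_smul]
    rw [Finset.sum_comm]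
    simp_rw [← Finset.sum_smul, ← Matrix.mul_apply, Matrix.nonsing_inv_mul M hM, Matrix.one_apply,
      ite_smul, one_smul, zero_smul, Finset.sum_ite_eq, Finset.mem_univ, if_true]
  rw [v_eq]
  exact Submodule.sum_mem _ fun i _ => Submodule.smul_mem _ _ (Submodule.subset_span ⟨i, rfl⟩)

theorem det_algebraMap_X_ne_zero {ι σ R S : Type*} [Fintype ι] [DecidableEq ι] [CommRing R]
    [Nontrivial R] [CommRing S] [Algebra (MvPolynomial σ R) S]
    (hinj : Function.Injective (algebraMap (MvPolynomial σ R) S)) {t : ι × ι → σ}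
    (ht : Function.Injective t) :
    (Matrix.of fun i j => algebraMap (MvPolynomial σ R) S (.X (t (i, j)))).det ≠ 0 := by
  let evalVars : MvPolynomial (ι × ι) R →+* S :=
    (algebraMap (MvPolynomial σ R) S).comp (MvPolynomial.rename t).toRingHom
  have evalVars_injective : Function.Injective evalVars :=
    hinj.comp (MvPolynomial.rename_injective t ht)
  have eq_map : (Matrix.of fun i j => algebraMap (MvPolynomial σ R) S (.X (t (i, j)))) =
      evalVars.mapMatrix (Matrix.mvPolynomialX ι ι R) := by
    ext i j
    simp [evalVars]
  rw [eq_map, ← RingHom.map_det]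
  exact (map_ne_zero_iff evalVars evalVars_injective).2 (Matrix.det_mvPolynomialX_ne_zero ι R)

variable {F : Type*} [Field F] {G : Type*} {FF : Type*} [Field FF] [Algebra F FF]
  [Algebra (MvPolynomial (G × ℕ × ℕ) F) FF] {A : Type*} [NonUnitalNonAssocRing A] [Module F A]
  [SMulCommClass F A A] [IsScalarTower F A A]

theorem isGradedSpanning_genericAlg
    (hinj : Function.Injective (algebraMap (MvPolynomial (G × ℕ × ℕ) F) FF))
    (𝒜 : G → Submodule F A) (nU : G → ℕ) (bU : ∀ g : G, Module.Basis (Fin (nU g)) F (𝒜 g)) :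
    IsGradedSpanning 𝒜 (genericAlg F FF 𝒜 nU bU) := by
  intro g
  have index_injective :
      Function.Injective fun p : Fin (nU g) × Fin (nU g) => (g, (p.1 : ℕ), (p.2 : ℕ)) := by
    rintro ⟨i, j⟩ ⟨k, l⟩ h
    simpa [Fin.ext_iff] using h
  refine (baseChange_eq_span_range_basis (bU g)).le.trans <|
    (span_range_le_span_range_sum_smul
      (det_algebraMap_X_ne_zero hinj index_injective).isUnit _).trans (Submodule.span_mono ?_)
  rintro _ ⟨i, rfl⟩
  refine ⟨NonUnitalAlgebra.subset_adjoin F ⟨g, i, ?_⟩, Submodule.sum_mem _ fun j _ =>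
    Submodule.smul_mem _ _ (Submodule.tmul_mem_baseChange_of_mem 1 (bU g j).2)⟩
  simp only [Matrix.of_apply, TensorProduct.smul_tmul', smul_eq_mul, mul_one]

end GenericElements

/-- Generic-elements setup: `U` a `G`-graded simple algebra (`G` abelian), finite-dimensional over
`F = Γ(U)_e`, and `F_U ⊆ Ũ = FF ⊗ U` its algebra of generic elements, where `FF` is an extension
of the fraction field of the polynomial ring `F[T]`.  Then `Z_U = Z(M(F_U))_e` is isomorphic as an
`F`-algebra to an `F`-subalgebra of `FF`; in particular it is a commutative integral domain. -/
theorem center_of_generic_mult_algebra_embeds_in_field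
    {F : Type*} [Field F] {G : Type*} [CommGroup G] [DecidableEq G]
    {FF : Type*} [Field FF] [Algebra F FF] [Algebra (MvPolynomial (G × ℕ × ℕ) F) FF]
    [IsScalarTower F (MvPolynomial (G × ℕ × ℕ) F) FF]
    (hinj : Function.Injective (algebraMap (MvPolynomial (G × ℕ × ℕ) F) FF))
    {A : Type*} [NonUnitalNonAssocRing A] [Module F A] [SMulCommClass F A A]
    [IsScalarTower F A A] [FiniteDimensional F A]
    (𝒜 : G → Submodule F A) (hgr : IsAlgGrading F 𝒜) (hsimp : IsGradedSimple F 𝒜)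
    (hbase : ∀ φ : Module.End F A,
      φ ∈ centroid F (A := A) ⊓ endGrading F 𝒜 1 ↔ ∃ c : F, φ = c • (1 : Module.End F A))
    (nU : G → ℕ) (bU : ∀ g : G, Module.Basis (Fin (nU g)) F (𝒜 g)) :
    ∃ θ : Module.End F ↥(genericAlg F FF 𝒜 nU bU) → FF,
      Set.InjOn θ (centerMultE F FF 𝒜 (genericAlg F FF 𝒜 nU bU)) ∧
      θ 0 = 0 ∧
      (∀ x ∈ centerMultE F FF 𝒜 (genericAlg F FF 𝒜 nU bU),
        ∀ y ∈ centerMultE F FF 𝒜 (genericAlg F FF 𝒜 nU bU),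
          θ (x + y) = θ x + θ y ∧ θ (x * y) = θ x * θ y) ∧
      (∀ c : F, ∀ x ∈ centerMultE F FF 𝒜 (genericAlg F FF 𝒜 nU bU),
          θ (c • x) = algebraMap F FF c * θ x) ∧
      -- in particular `Z_U` is a commutative integral domain
      (∀ x ∈ centerMultE F FF 𝒜 (genericAlg F FF 𝒜 nU bU),
        ∀ y ∈ centerMultE F FF 𝒜 (genericAlg F FF 𝒜 nU bU), x * y = y * x) ∧
      (∀ x ∈ centerMultE F FF 𝒜 (genericAlg F FF 𝒜 nU bU),
        ∀ y ∈ centerMultE F FF 𝒜 (genericAlg F FF 𝒜 nU bU),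
          x * y = 0 → x = 0 ∨ y = 0) := by
  have := hsimp.nontrivial
  exact center_of_generic_mult_algebra_embeds_in_field_general hgr.1.submodule_iSup_eq_top
    (fun φ => (hbase φ).1) (isGradedSpanning_genericAlg hinj 𝒜 nU bU)
end

section
/- Let U and V be finite-dimensional G-graded algebras over an algebraically closed field F. Suppose that for some field extension F ⊆ F̃ and some F-automorphism σ of F̃ there exists a G-graded isomorphism of F-algebras φ: F̃ ⊗_F U → F̃ ⊗_F V such that φ(α ⊗ u) = σ(α)·φ(1 ⊗ u) for all α ∈ F̃ and u ∈ U. Then U and V are isomorphic as G-graded algebras. -/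
/-!
Only finitely many scalars occur when `φ` and `φ⁻¹` are expanded on the `F`-forms `1 ⊗ A` and
`1 ⊗ B`, so they lie in a finitely generated `F`-algebra `R`, and the Nullstellensatz supplies an
`F`-point `χ : R → F`. Applying `χ` to the coefficients of `φ (1 ⊗ a)` gives a multiplicative graded
map `A → B`. Its inverse comes from `φ⁻¹`, where semilinearity forces the point `χ ∘ σ` in place of
`χ`.
-/

open TensorProduct

theorem nonempty_algHom_of_finiteType (F K R : Type*) [Field F] [Field K] [IsAlgClosed K]
    [Algebra F K] [CommRing R] [Nontrivial R] [Algebra F R] [Algebra.FiniteType F R] :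
    Nonempty (R →ₐ[F] K) := by
  obtain ⟨m, _⟩ := Ideal.exists_maximal R
  let _ : Field (R ⧸ m) := Ideal.Quotient.field m
  have : Module.Finite F (R ⧸ m) := finite_of_finite_type_of_isJacobsonRing F (R ⧸ m)
  exact ⟨IsAlgClosed.lift.comp (Ideal.Quotient.mkₐ F m)⟩

/-- The linear functional `l` restricts to a homomorphism of `F`-algebras `R → F`. The functional is
kept total so that it can be applied to the coefficients of any tensor in `S ⊗ M`. -/
structure IsCharacterOn {F S : Type*} [CommSemiring F] [Semiring S] [Algebra F S]
    (l : S →ₗ[F] F) (R : Subalgebra F S) : Prop where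
  protected map_one : l 1 = 1
  protected map_mul : ∀ ⦃x⦄, x ∈ R → ∀ ⦃y⦄, y ∈ R → l (x * y) = l x * l y

namespace IsCharacterOn

theorem comp_algHom {F S T : Type*} [CommSemiring F] [Semiring S] [Algebra F S] [Semiring T]
    [Algebra F T] {l : T →ₗ[F] F} {R : Subalgebra F T} (hl : IsCharacterOn l R) (σ : S →ₐ[F] T) :
    IsCharacterOn (l ∘ₗ σ.toLinearMap) (R.comap σ) where
  map_one := by simp [hl.map_one]
  map_mul x hx y hy := by
    simpa using hl.map_mul (Subalgebra.mem_comap .. |>.1 hx) (Subalgebra.mem_comap .. |>.1 hy)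

theorem exists_of_fg {F S : Type*} [Field F] [IsAlgClosed F] [CommRing S] [Nontrivial S]
    [Algebra F S] {R : Subalgebra F S} (hR : R.FG) : ∃ l : S →ₗ[F] F, IsCharacterOn l R := by
  have : Algebra.FiniteType F R := R.fg_iff_finiteType.1 hR
  obtain ⟨χ⟩ := nonempty_algHom_of_finiteType F F R
  obtain ⟨l, hl⟩ := LinearMap.exists_extend (p := Subalgebra.toSubmodule R) χ.toLinearMap
  have l_coe (r : R) : l r = χ r := LinearMap.congr_fun hl r
  refine ⟨l, by simpa using l_coe 1, fun x hx y hy ↦ ?_⟩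
  calc l (x * y) = χ (⟨x, hx⟩ * ⟨y, hy⟩) := l_coe (⟨x, hx⟩ * ⟨y, hy⟩)
    _ = l x * l y := by rw [map_mul, ← l_coe, ← l_coe]

end IsCharacterOn

section TensorsOver

variable {F S : Type*} [CommSemiring F] [Semiring S] [Algebra F S]

/-- The tensors in `S ⊗ M` all of whose coefficients can be taken in `R`, that is, the image of
`R ⊗ M` in `S ⊗ M`. -/
def tensorsOver (R : Subalgebra F S) (M : Type*) [AddCommMonoid M] [Module F M] :
    Submodule F (S ⊗[F] M) :=
  LinearMap.range (R.val.toLinearMap.rTensor M)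

variable {M N : Type*} [AddCommMonoid M] [Module F M] [AddCommMonoid N] [Module F N]

theorem range_rTensor_subtype_le_tensorsOver {P : Submodule F S} {R : Subalgebra F S}
    (h : P ≤ Subalgebra.toSubmodule R) :
    LinearMap.range (P.subtype.rTensor M) ≤ tensorsOver R M := by
  have factor : P.subtype = R.val.toLinearMap ∘ₗ Submodule.inclusion h := rfl
  rw [factor, LinearMap.rTensor_comp]
  exact LinearMap.range_comp_le_range _ _

theorem tensorsOver_mono {R R' : Subalgebra F S} (h : R ≤ R') :
    tensorsOver R M ≤ tensorsOver R' M :=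
  range_rTensor_subtype_le_tensorsOver (P := Subalgebra.toSubmodule R) h

theorem exists_fg_range_le_tensorsOver [Module.Finite F M] (f : M →ₗ[F] S ⊗[F] N) :
    ∃ R : Subalgebra F S, R.FG ∧ LinearMap.range f ≤ tensorsOver R N := by
  obtain ⟨s, hs⟩ := Module.Finite.fg_top (R := F) (M := M)
  obtain ⟨P, hP, hsP⟩ := TensorProduct.exists_finite_submodule_left_of_setFinite
    (f '' s) (s.finite_toSet.image f)
  obtain ⟨t, ht⟩ := Module.Finite.iff_fg.1 hP
  refine ⟨Algebra.adjoin F (t : Set S), Subalgebra.fg_adjoin_finset t, ?_⟩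
  have hPt : P ≤ Subalgebra.toSubmodule (Algebra.adjoin F (t : Set S)) := by
    rw [← ht]
    exact Algebra.span_le_adjoin F (t : Set S)
  rw [LinearMap.range_eq_map, ← hs, Submodule.map_span, Submodule.span_le]
  exact hsP.trans (range_rTensor_subtype_le_tensorsOver hPt)

end TensorsOver

section Specialize

variable {F S : Type*} [CommSemiring F] [Semiring S] [Algebra F S]
variable {M N : Type*} [AddCommMonoid M] [Module F M] [AddCommMonoid N] [Module F N]

/-- Specialization of coefficients: the map `S ⊗ M → M` sending `s ⊗ m` to `l s • m`. -/
noncomputable def specialize (l : S →ₗ[F] F) (M : Type*) [AddCommMonoid M] [Module F M] :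
    S ⊗[F] M →ₗ[F] M :=
  (TensorProduct.lid F M).toLinearMap ∘ₗ l.rTensor M

@[simp]
theorem specialize_tmul (l : S →ₗ[F] F) (s : S) (m : M) :
    specialize l M (s ⊗ₜ[F] m) = l s • m := by
  simp [specialize]

theorem specialize_baseChange (l : S →ₗ[F] F) (f : M →ₗ[F] N) (x : S ⊗[F] M) :
    specialize l N (f.baseChange S x) = f (specialize l M x) := by
  induction x with
  | zero => simp
  | tmul s m => simp
  | add x y hx hy => simp only [map_add, hx, hy]

theorem specialize_mem_of_mem_baseChange (l : S →ₗ[F] F) {p : Submodule F M} {x : S ⊗[F] M}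
    (hx : x ∈ p.baseChange S) : specialize l M x ∈ p := by
  obtain ⟨y, rfl⟩ := hx
  rw [specialize_baseChange]
  exact Subtype.property _

theorem IsCharacterOn.specialize_smul {l : S →ₗ[F] F} {R : Subalgebra F S}
    (hl : IsCharacterOn l R) {r : S} (hr : r ∈ R) {x : S ⊗[F] M} (hx : x ∈ tensorsOver R M) :
    specialize l M (r • x) = l r • specialize l M x := by
  obtain ⟨x, rfl⟩ := hx
  induction x with
  | zero => simp
  | tmul s m => simp [smul_tmul', hl.map_mul hr s.2, mul_smul]
  | add x y hx hy => simp only [map_add, smul_add, hx, hy]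

theorem IsCharacterOn.specialize_mul {A : Type*} [NonUnitalNonAssocSemiring A] [Module F A]
    [SMulCommClass F A A] [IsScalarTower F A A] {l : S →ₗ[F] F} {R : Subalgebra F S}
    (hl : IsCharacterOn l R) {x y : S ⊗[F] A} (hx : x ∈ tensorsOver R A)
    (hy : y ∈ tensorsOver R A) :
    specialize l A (x * y) = specialize l A x * specialize l A y := by
  obtain ⟨x, rfl⟩ := hx
  obtain ⟨y, rfl⟩ := hy
  induction x with
  | zero => simp
  | add x x' hx hx' => simp only [map_add, add_mul, hx, hx']
  | tmul r a =>
    induction y with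
    | zero => simp
    | add y y' hy hy' => simp only [map_add, mul_add, hy, hy']
    | tmul s b => simp [hl.map_mul r.2 s.2, smul_mul_smul_comm]

end Specialize

section Semilinear

variable {F S T : Type*} [CommSemiring F] [Semiring S] [Algebra F S] [Semiring T] [Algebra F T]
variable {M N : Type*} [AddCommMonoid M] [Module F M] [AddCommMonoid N] [Module F N]

theorem map_smul_of_map_tmul {σ : S →ₐ[F] T} {f : S ⊗[F] M →ₗ[F] T ⊗[F] N}
    (hf : ∀ s m, f (s ⊗ₜ m) = σ s • f (1 ⊗ₜ m)) (s : S) (x : S ⊗[F] M) :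
    f (s • x) = σ s • f x := by
  induction x with
  | zero => simp
  | tmul r m => rw [smul_tmul', smul_eq_mul, hf, hf r, map_mul, mul_smul]
  | add x y hx hy => simp only [smul_add, map_add, hx, hy]

/-- The map `M → N` obtained from `f : S ⊗ M → T ⊗ N` by restricting to `1 ⊗ M` and specializing the
coefficients of the result along `l`. -/
noncomputable def specializeMap (l : T →ₗ[F] F) (f : S ⊗[F] M →ₗ[F] T ⊗[F] N) : M →ₗ[F] N :=
  specialize l N ∘ₗ f ∘ₗ TensorProduct.mk F S M 1

theorem specializeMap_apply (l : T →ₗ[F] F) (f : S ⊗[F] M →ₗ[F] T ⊗[F] N) (m : M) :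
    specializeMap l f m = specialize l N (f (1 ⊗ₜ m)) :=
  rfl

theorem specializeMap_mem (l : T →ₗ[F] F) {f : S ⊗[F] M →ₗ[F] T ⊗[F] N} {p : Submodule F M}
    {q : Submodule F N} (hf : ∀ x ∈ p.baseChange S, f x ∈ q.baseChange T) {m : M} (hm : m ∈ p) :
    specializeMap l f m ∈ q :=
  specialize_mem_of_mem_baseChange l (hf _ (Submodule.tmul_mem_baseChange_of_mem 1 hm))

theorem IsCharacterOn.specializeMap_mul {A B : Type*}
    [NonUnitalNonAssocSemiring A] [Module F A] [SMulCommClass F A A] [IsScalarTower F A A]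
    [NonUnitalNonAssocSemiring B] [Module F B] [SMulCommClass F B B] [IsScalarTower F B B]
    {l : T →ₗ[F] F} {R : Subalgebra F T} (hl : IsCharacterOn l R)
    {f : S ⊗[F] A →ₗ[F] T ⊗[F] B} (hmul : ∀ x y, f (x * y) = f x * f y)
    (hf : ∀ a, f (1 ⊗ₜ a) ∈ tensorsOver R B) (a a' : A) :
    specializeMap l f (a * a') = specializeMap l f a * specializeMap l f a' := by
  simp only [specializeMap_apply, ← hl.specialize_mul (hf a) (hf a'), ← hmul,
    Algebra.TensorProduct.tmul_mul_tmul, mul_one]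

theorem IsCharacterOn.specializeMap_specialize {l : T →ₗ[F] F} {R : Subalgebra F T}
    (hl : IsCharacterOn l R) {σ : S →ₐ[F] T} {l' : S →ₗ[F] F} (hl' : ∀ s, l' s = l (σ s))
    {R' : Subalgebra F S} (hR' : R' ≤ R.comap σ) {f : S ⊗[F] M →ₗ[F] T ⊗[F] N}
    (hσ : ∀ s x, f (s • x) = σ s • f x) (hf : ∀ m, f (1 ⊗ₜ m) ∈ tensorsOver R N)
    {x : S ⊗[F] M} (hx : x ∈ tensorsOver R' M) :
    specializeMap l f (specialize l' M x) = specialize l N (f x) := by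
  obtain ⟨x, rfl⟩ := hx
  induction x with
  | zero => simp
  | add x y hx hy => simp only [map_add, hx, hy]
  | tmul s m =>
    have map_tmul : f ((s : S) ⊗ₜ m) = σ s • f (1 ⊗ₜ m) := by
      rw [← hσ, smul_tmul', smul_eq_mul, mul_one]
    have hs : σ s ∈ R := hR' s.2
    simp [map_tmul, hl', hl.specialize_smul hs (hf m), specializeMap_apply]

theorem IsCharacterOn.leftInverse_specializeMap {l : T →ₗ[F] F} {R : Subalgebra F T}
    (hl : IsCharacterOn l R) {σ : S →ₐ[F] T} {l' : S →ₗ[F] F} (hl' : ∀ s, l' s = l (σ s))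
    {R' : Subalgebra F S} (hR' : R' ≤ R.comap σ) {f : S ⊗[F] M →ₗ[F] T ⊗[F] N}
    {g : T ⊗[F] N →ₗ[F] S ⊗[F] M} (hσ : ∀ s x, f (s • x) = σ s • f x)
    (hf : ∀ m, f (1 ⊗ₜ m) ∈ tensorsOver R N) (hg : ∀ n, g (1 ⊗ₜ n) ∈ tensorsOver R' M)
    (hfg : Function.LeftInverse f g) :
    Function.LeftInverse (specializeMap l f) (specializeMap l' g) := fun n ↦ by
  rw [specializeMap_apply l' g, hl.specializeMap_specialize hl' hR' hσ hf (hg n), hfg,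
    specialize_tmul, hl.map_one, one_smul]

/-- If the coefficients of `φ` on `1 ⊗ M` lie in `R` and those of `φ⁻¹` on `1 ⊗ N` in `σ⁻¹(R)`, then
specializing `φ` along `l` and `φ⁻¹` along `l ∘ σ` gives mutually inverse maps. -/
noncomputable def IsCharacterOn.specializeEquiv {l : T →ₗ[F] F} {R : Subalgebra F T}
    (hl : IsCharacterOn l R) {σ : S ≃ₐ[F] T} {φ : S ⊗[F] M ≃ₗ[F] T ⊗[F] N}
    (hσ : ∀ s x, φ (s • x) = σ s • φ x) (hφ : ∀ m, φ (1 ⊗ₜ m) ∈ tensorsOver R N)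
    (hφ' : ∀ n, φ.symm (1 ⊗ₜ n) ∈ tensorsOver (R.comap (σ : S →ₐ[F] T)) M) : M ≃ₗ[F] N :=
  .ofLinearMap (specializeMap l φ.toLinearMap)
    (specializeMap (l ∘ₗ (σ : S →ₐ[F] T).toLinearMap) φ.symm.toLinearMap)
    (LinearMap.ext <| hl.leftInverse_specializeMap (σ := (σ : S →ₐ[F] T)) (fun _ ↦ by simp) le_rfl
      hσ hφ hφ' φ.apply_symm_apply)
    (LinearMap.ext <| (hl.comp_algHom (σ : S →ₐ[F] T)).leftInverse_specializeMap
      (σ := (σ.symm : T →ₐ[F] S)) (fun _ ↦ by simp) (fun t ht ↦ by simpa using ht)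
      (fun t y ↦ φ.symm_apply_eq.2 (by simp [hσ])) hφ' hφ φ.symm_apply_apply)

end Semilinear

section AlgClosed

variable {F S T : Type*} [Field F] [IsAlgClosed F] [CommRing S] [Algebra F S]
  [CommRing T] [Nontrivial T] [Algebra F T]

theorem exists_isCharacterOn_mem_tensorsOver {M N : Type*} [AddCommMonoid M] [Module F M]
    [Module.Finite F M] [AddCommMonoid N] [Module F N] [Module.Finite F N] (σ : S ≃ₐ[F] T)
    (φ : S ⊗[F] M ≃ₗ[F] T ⊗[F] N) :
    ∃ (l : T →ₗ[F] F) (R : Subalgebra F T), IsCharacterOn l R ∧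
      (∀ m, φ (1 ⊗ₜ m) ∈ tensorsOver R N) ∧
      ∀ n, φ.symm (1 ⊗ₜ n) ∈ tensorsOver (R.comap (σ : S →ₐ[F] T)) M := by
  obtain ⟨R₁, hR₁, hφ⟩ := exists_fg_range_le_tensorsOver (φ.toLinearMap ∘ₗ TensorProduct.mk F S M 1)
  obtain ⟨R₂, hR₂, hφ'⟩ :=
    exists_fg_range_le_tensorsOver (φ.symm.toLinearMap ∘ₗ TensorProduct.mk F T N 1)
  obtain ⟨l, hl⟩ := IsCharacterOn.exists_of_fg (hR₁.sup (hR₂.map (σ : S →ₐ[F] T)))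
  refine ⟨l, _, hl, fun m ↦ tensorsOver_mono le_sup_left (hφ ⟨m, rfl⟩), fun n ↦ ?_⟩
  exact tensorsOver_mono (Subalgebra.map_le.1 le_sup_right) (hφ' ⟨n, rfl⟩)

theorem graded_iso_of_semilinear_graded_iso_of_scalar_extension_general {ι A B : Type*}
    [NonUnitalNonAssocSemiring A] [Module F A] [SMulCommClass F A A] [IsScalarTower F A A]
    [NonUnitalNonAssocSemiring B] [Module F B] [SMulCommClass F B B] [IsScalarTower F B B]
    [Module.Finite F A] [Module.Finite F B] (𝒜 : ι → Submodule F A) (ℬ : ι → Submodule F B)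
    (σ : S ≃ₐ[F] T) (φ : S ⊗[F] A ≃ₗ[F] T ⊗[F] B) (hmul : ∀ x y, φ (x * y) = φ x * φ y)
    (hgraded : ∀ i, (((𝒜 i).baseChange S).restrictScalars F).map φ.toLinearMap =
      ((ℬ i).baseChange T).restrictScalars F)
    (hsemilinear : ∀ s a, φ (s ⊗ₜ a) = σ s • φ (1 ⊗ₜ a)) :
    ∃ ψ : A ≃ₗ[F] B, (∀ x y, ψ (x * y) = ψ x * ψ y) ∧
      ∀ i, (𝒜 i).map ψ.toLinearMap = ℬ i := by
  have hσ : ∀ s x, φ (s • x) = σ s • φ x :=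
    map_smul_of_map_tmul (σ := (σ : S →ₐ[F] T)) (f := φ.toLinearMap) hsemilinear
  obtain ⟨l, R, hl, hφ, hφ'⟩ := exists_isCharacterOn_mem_tensorsOver σ φ
  let ψ : A ≃ₗ[F] B := hl.specializeEquiv hσ hφ hφ'
  have mem_of_mem i : ∀ x ∈ (𝒜 i).baseChange S, φ x ∈ (ℬ i).baseChange T := fun x hx ↦
    (hgraded i).le ⟨x, hx, rfl⟩
  have symm_mem_of_mem i : ∀ y ∈ (ℬ i).baseChange T, φ.symm y ∈ (𝒜 i).baseChange S := fun y hy ↦ by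
    obtain ⟨x, hx, rfl⟩ := (hgraded i).ge hy
    simpa using hx
  refine ⟨ψ, hl.specializeMap_mul (f := φ.toLinearMap) hmul hφ, fun i ↦ le_antisymm ?_ ?_⟩
  · exact Submodule.map_le_iff_le_comap.2 fun a ↦ specializeMap_mem l (mem_of_mem i)
  · exact fun b hb ↦ ⟨ψ.symm b, specializeMap_mem _ (symm_mem_of_mem i) hb, ψ.apply_symm_apply b⟩

end AlgClosed

open TensorProduct in
/-- **Lemma (key technical step).** Let `A`, `B` be finite-dimensional `G`-graded algebras over an
algebraically closed field `F`.  If for some field extension `F ⊆ F̃` and some `F`-automorphism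
`σ` of `F̃` there is a `G`-graded isomorphism of `F`-algebras
`φ : F̃ ⊗ A → F̃ ⊗ B` with `φ(α ⊗ u) = σ(α) • φ(1 ⊗ u)`, then `A` and `B` are isomorphic as
`G`-graded algebras. -/
theorem graded_iso_of_semilinear_graded_iso_of_scalar_extension
    {F : Type*} [Field F] [IsAlgClosed F] {G : Type*} [CommGroup G] [DecidableEq G]
    {A B : Type*}
    [NonUnitalNonAssocRing A] [Module F A] [SMulCommClass F A A] [IsScalarTower F A A]
    [NonUnitalNonAssocRing B] [Module F B] [SMulCommClass F B B] [IsScalarTower F B B]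
    [FiniteDimensional F A] [FiniteDimensional F B]
    (𝒜 : G → Submodule F A) (ℬ : G → Submodule F B)
    (hgrA : IsAlgGrading F 𝒜) (hgrB : IsAlgGrading F ℬ)
    (FF : Type*) [Field FF] [Algebra F FF]
    (σ : FF ≃ₐ[F] FF)
    (φ : (FF ⊗[F] A) ≃ₗ[F] (FF ⊗[F] B))
    (hmul : ∀ x y : FF ⊗[F] A, φ (x * y) = φ x * φ y)
    (hgraded : ∀ g : G,
      (((𝒜 g).baseChange FF).restrictScalars F).map (φ : (FF ⊗[F] A) →ₗ[F] (FF ⊗[F] B)) =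
        ((ℬ g).baseChange FF).restrictScalars F)
    (hsemilinear : ∀ (α : FF) (u : A), φ (α ⊗ₜ[F] u) = σ α • φ ((1 : FF) ⊗ₜ[F] u)) :
    IsGradedIso F 𝒜 ℬ := by
  exact graded_iso_of_semilinear_graded_iso_of_scalar_extension_general 𝒜 ℬ σ φ hmul hgraded
    hsemilinear
end

section
/- Graded Jacobson density theorem: Let R be an associative G-graded algebra, V a graded simple left R-module, and D = End_R^gr(V). If v_1,…,v_n ∈ V are homogeneous elements that are linearly independent over D, then for any w_1,…,w_n ∈ V there exists r ∈ R such that r·v_i = w_i for i = 1,…,n. -/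
noncomputable section

variable {G : Type*} [Group G] [DecidableEq G]
variable {R : Type*} [Ring R] {V : Type*} [AddCommGroup V] [Module R V]

/-- `ℛ` is a `G`-grading of the associative ring `R`. -/
def IsRingGrading (ℛ : G → AddSubgroup R) : Prop :=
  DirectSum.IsInternal ℛ ∧ ∀ (g h : G), ∀ r ∈ ℛ g, ∀ s ∈ ℛ h, r * s ∈ ℛ (g * h)

/-- `𝒱` makes `V` a `G`-graded module over the `G`-graded ring `(R, ℛ)`. -/
def IsModuleGrading (ℛ : G → AddSubgroup R) (𝒱 : G → AddSubgroup V) : Prop :=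
  DirectSum.IsInternal 𝒱 ∧ ∀ (g h : G), ∀ r ∈ ℛ g, ∀ v ∈ 𝒱 h, r • v ∈ 𝒱 (g * h)

/-- a submodule is homogeneous if it is the sum of its intersections with the components -/
def IsHomogSubmoduleOf (𝒱 : G → AddSubgroup V) (W : Submodule R V) : Prop :=
  W.toAddSubgroup = ⨆ g, W.toAddSubgroup ⊓ 𝒱 g

/-- `V` is a graded simple `R`-module: `R•V ≠ 0` and the only homogeneous submodules are `0`
and `V`. -/
def IsGradedSimpleModule (𝒱 : G → AddSubgroup V) : Prop :=
  (∃ (r : R) (v : V), r • v ≠ 0) ∧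
    ∀ W : Submodule R V, IsHomogSubmoduleOf 𝒱 W → W = ⊥ ∨ W = ⊤

/-- the homogeneous component of degree `h` of the ring of `R`-module endomorphisms of `V`:
those `φ` with `φ(V_g) ⊆ V_{gh}` for all `g`. -/
def endModGrading (𝒱 : G → AddSubgroup V) (h : G) : AddSubgroup (Module.End R V) where
  carrier := {φ | ∀ g : G, ∀ x ∈ 𝒱 g, φ x ∈ 𝒱 (g * h)}
  add_mem' := fun hf hg g x hx => (𝒱 _).add_mem (hf g x hx) (hg g x hx)
  zero_mem' := fun g x hx => (𝒱 _).zero_mem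
  neg_mem' := fun hf g x hx => (𝒱 _).neg_mem (hf g x hx)

/-- `D = End_R^gr(V)`: the ring of `R`-module endomorphisms of `V` that are sums of homogeneous
ones. -/
def endModGr (𝒱 : G → AddSubgroup V) : AddSubgroup (Module.End R V) :=
  ⨆ h : G, endModGrading 𝒱 h

end

/-!
For a set `S` of homogeneous vectors, the left annihilator `I` of `S` is a homogeneous left ideal,
so for every homogeneous `u` the submodule `I u` is `0` or `V`. If `x` is homogeneous and killed by
the annihilator of `S ∪ {u}`, then `r u ↦ r x` (`r ∈ I`) is well defined on `I u` and comes from a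
homogeneous `φ ∈ D`, so `x - φ u` is killed by `I`. By induction on a finite `S`, a homogeneous
vector killed by the annihilator of `S` lies in the `D`-span of `S`. Hence, for independent `v i`,
the annihilator of the `v j` with `j ≠ i` maps `v i` onto all of `V`.
-/

section RangeCoe

open DirectSum

variable {ι M : Type*} [DecidableEq ι] [AddCommGroup M]

theorem range_coeAddMonoidHom_addSubgroup (A : ι → AddSubgroup M) :
    (DirectSum.coeAddMonoidHom A).range = ⨆ i, A i := by
  apply le_antisymm
  · rintro _ ⟨c, rfl⟩
    induction c using DirectSum.induction_on with
    | zero => simp only [map_zero, zero_mem]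
    | of i m =>
      simpa only [coeAddMonoidHom_of] using AddSubgroup.mem_iSup_of_mem i m.2
    | add c d hc hd => simpa only [map_add] using add_mem hc hd
  · exact iSup_le fun i m hm => ⟨of (fun i => A i) i ⟨m, hm⟩, coeAddMonoidHom_of A i _⟩

end RangeCoe

section Decompose

open DirectSum

variable {G R V : Type*} [Mul G] [IsRightCancelMul G] [DecidableEq G] [Ring R] [AddCommGroup V]
  [Module R V] {ℛ : G → AddSubgroup R} {𝒱 : G → AddSubgroup V} [Decomposition 𝒱] {a : G} {x : V}

theorem decompose_coeAddMonoidHom_smul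
    (hsmul : ∀ g h, ∀ r ∈ ℛ g, ∀ v ∈ 𝒱 h, r • v ∈ 𝒱 (g * h)) (c : ⨁ g, ℛ g) (hx : x ∈ 𝒱 a) (g : G) :
    (decompose 𝒱 (DirectSum.coeAddMonoidHom ℛ c • x) (g * a) : V) = (c g : R) • x := by
  induction c using DirectSum.induction_on with
  | zero =>
    simp only [map_zero, zero_smul, decompose_zero, DirectSum.zero_apply, ZeroMemClass.coe_zero]
  | of k r =>
    have hrx : (r : R) • x ∈ 𝒱 (k * a) := hsmul k a r r.2 x hx
    rw [coeAddMonoidHom_of]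
    obtain rfl | hkg := eq_or_ne k g
    · rw [decompose_of_mem_same 𝒱 hrx, of_eq_same]
    · rw [decompose_of_mem_ne 𝒱 hrx (mul_left_injective a |>.ne hkg), of_eq_of_ne _ _ _ hkg.symm,
        ZeroMemClass.coe_zero, zero_smul]
  | add c d hc hd =>
    simp only [map_add, add_smul, decompose_add, DirectSum.add_apply, AddSubgroup.coe_add,
      hc, hd]

end Decompose

section LeftAnnihilator

variable {R V : Type*} [Semiring R] [AddCommMonoid V] [Module R V]

variable (R) in
/-- The left annihilator of a set `S` of vectors: the left ideal of the ring elements killing every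
element of `S`. The density theorem amounts to describing the vectors that it kills in turn. -/
def leftAnnihilator (S : Set V) : Ideal R :=
  ⨅ x ∈ S, Ideal.torsionOf R V x

theorem mem_leftAnnihilator {S : Set V} {r : R} :
    r ∈ leftAnnihilator R S ↔ ∀ x ∈ S, r • x = 0 := by
  simp only [leftAnnihilator, Submodule.mem_iInf, Ideal.mem_torsionOf_iff]

theorem leftAnnihilator_empty : leftAnnihilator R (∅ : Set V) = ⊤ := by
  simp only [leftAnnihilator, Set.mem_empty_iff_false, iInf_false, iInf_top]

theorem mem_leftAnnihilator_insert {S : Set V} {u : V} {r : R} :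
    r ∈ leftAnnihilator R (insert u S) ↔ r • u = 0 ∧ r ∈ leftAnnihilator R S := by
  simp only [mem_leftAnnihilator, Set.forall_mem_insert]

theorem exists_smul_eq_of_forall_exists_mem_leftAnnihilator {ι : Type*} [DecidableEq ι]
    {v w : ι → V} {s : Finset ι}
    (h : ∀ i ∈ s, ∃ r ∈ leftAnnihilator R (v '' ↑(s.erase i)), r • v i = w i) :
    ∃ r : R, ∀ i ∈ s, r • v i = w i := by
  choose! r hr hrv using h
  refine ⟨∑ i ∈ s, r i, fun j hj => ?_⟩
  rw [Finset.sum_smul, Finset.sum_eq_single_of_mem j hj, hrv j hj]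
  intro i hi hij
  exact mem_leftAnnihilator.1 (hr i hi) _ ⟨j, Finset.mem_erase.2 ⟨hij.symm, hj⟩, rfl⟩

end LeftAnnihilator

section FactorThrough

variable {R M N P : Type*} [Ring R] [AddCommGroup M] [AddCommGroup N] [AddCommGroup P]
  [Module R M] [Module R N] [Module R P]

theorem exists_comp_eq_of_surjective_of_ker_le_ker {f : M →ₗ[R] N} {g : M →ₗ[R] P}
    (hf : Function.Surjective f) (hker : f.ker ≤ g.ker) : ∃ φ : N →ₗ[R] P, φ ∘ₗ f = g := by
  refine ⟨f.ker.liftQ g hker ∘ₗ (f.quotKerEquivOfSurjective hf).symm.toLinearMap, ?_⟩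
  ext m
  simp only [LinearMap.comp_apply, LinearEquiv.coe_coe,
    LinearMap.quotKerEquivOfSurjective_symm_apply, Submodule.liftQ_apply]

end FactorThrough

section GradedEnd

variable {G R V : Type*} [Group G] [Ring R] [AddCommGroup V] [Module R V] {𝒱 : G → AddSubgroup V}

theorem one_mem_endModGrading : (1 : Module.End R V) ∈ endModGrading 𝒱 1 := fun g x hx => by
  rwa [mul_one]

theorem mul_mem_endModGrading {φ ψ : Module.End R V} {h k : G}
    (hφ : φ ∈ endModGrading 𝒱 h) (hψ : ψ ∈ endModGrading 𝒱 k) :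
    φ * ψ ∈ endModGrading 𝒱 (k * h) := fun g x hx => by
  rw [← mul_assoc]
  exact hφ _ _ (hψ g x hx)

theorem mul_mem_endModGr {φ ψ : Module.End R V} (hφ : φ ∈ endModGr 𝒱) (hψ : ψ ∈ endModGr 𝒱) :
    φ * ψ ∈ endModGr 𝒱 := by
  have mul_mem_of_homogeneous {h : G} {φ : Module.End R V} (hφ : φ ∈ endModGrading 𝒱 h) :
      endModGr 𝒱 ≤ (endModGr 𝒱).comap (AddMonoidHom.mulLeft φ) :=
    iSup_le fun k ψ hψ => AddSubgroup.mem_iSup_of_mem (k * h) (mul_mem_endModGrading hφ hψ)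
  have mul_mem_right : endModGr 𝒱 ≤ (endModGr 𝒱).comap (AddMonoidHom.mulRight ψ) :=
    iSup_le fun h φ hφ => mul_mem_of_homogeneous hφ hψ
  exact mul_mem_right hφ

variable (R 𝒱) in
/-- `D = End_R^gr(V)` as a ring, over which `V` is a module. The product is composition of maps, so
`V` is a left module over it, where the usual convention of writing `D` on the right of `V` uses the
opposite ring. -/
def endModGrSubring : Subring (Module.End R V) where
  __ := endModGr 𝒱
  mul_mem' := mul_mem_endModGr
  one_mem' := AddSubgroup.mem_iSup_of_mem 1 one_mem_endModGrading

theorem mem_endModGrSubring_of_mem_endModGrading {φ : Module.End R V} {h : G}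
    (hφ : φ ∈ endModGrading 𝒱 h) : φ ∈ endModGrSubring R 𝒱 :=
  AddSubgroup.mem_iSup_of_mem h hφ

theorem linearIndependent_endModGrSubring_iff {ι : Type*} [Fintype ι] {v : ι → V} :
    LinearIndependent (endModGrSubring R 𝒱) v ↔ ∀ d : ι → Module.End R V,
      (∀ i, d i ∈ endModGr 𝒱) → ∑ i, d i (v i) = 0 → ∀ i, d i = 0 := by
  rw [Fintype.linearIndependent_iff]
  constructor
  · intro h d hd hsum i
    exact congrArg Subtype.val (h (fun i => ⟨d i, hd i⟩) hsum i)
  · intro h d hsum i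
    exact Subtype.ext (h (fun i => d i) (fun i => (d i).2) hsum i)

end GradedEnd

section GradedModule

open DirectSum Submodule

variable {G R V : Type*} [Group G] [DecidableEq G] [Ring R] [AddCommGroup V] [Module R V]
  {ℛ : G → AddSubgroup R} {𝒱 : G → AddSubgroup V} {I : Ideal R} {S : Set V}
  {a b g : G} {u x : V}

theorem IsRingGrading.iSup_eq_top (hR : IsRingGrading ℛ) : ⨆ g, ℛ g = ⊤ := by
  rw [← range_coeAddMonoidHom_addSubgroup, AddMonoidHom.range_eq_top.2 hR.1.surjective]

namespace IsModuleGrading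

theorem mono {ℛ' : G → AddSubgroup R} (hV : IsModuleGrading ℛ 𝒱) (hle : ∀ g, ℛ' g ≤ ℛ g) :
    IsModuleGrading ℛ' 𝒱 :=
  ⟨hV.1, fun g h r hr => hV.2 g h r (hle g hr)⟩

theorem apply_smul_eq_of_coeAddMonoidHom_smul_mem (hV : IsModuleGrading ℛ 𝒱) (c : ⨁ g, ℛ g)
    (hx : x ∈ 𝒱 a) (hcx : DirectSum.coeAddMonoidHom ℛ c • x ∈ 𝒱 (g * a)) :
    (c g : R) • x = DirectSum.coeAddMonoidHom ℛ c • x := by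
  let _ := hV.1.chooseDecomposition
  rw [← decompose_coeAddMonoidHom_smul hV.2 c hx, decompose_of_mem_same 𝒱 hcx]

theorem isHomogSubmoduleOf_leftAnnihilator (hV : IsModuleGrading ℛ 𝒱) (hR : ⨆ g, ℛ g = ⊤)
    (hS : ∀ x ∈ S, SetLike.IsHomogeneousElem 𝒱 x) :
    IsHomogSubmoduleOf ℛ (leftAnnihilator R S) := by
  classical
  refine le_antisymm (fun r hr => ?_) (iSup_le fun g => inf_le_left)
  obtain ⟨c, rfl⟩ : r ∈ (DirectSum.coeAddMonoidHom ℛ).range := by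
    rw [range_coeAddMonoidHom_addSubgroup, hR]
    exact AddSubgroup.mem_top r
  have component_mem (g : G) : (c g : R) ∈ leftAnnihilator R S := by
    refine mem_leftAnnihilator.2 fun x hxS => ?_
    obtain ⟨a, hx⟩ := hS x hxS
    have hcx := mem_leftAnnihilator.1 hr x hxS
    rw [hV.apply_smul_eq_of_coeAddMonoidHom_smul_mem c hx (hcx ▸ zero_mem _), hcx]
  rw [coeAddMonoidHom_eq_dfinsuppSum]
  exact sum_mem fun g _ => AddSubgroup.mem_iSup_of_mem g ⟨component_mem g, (c g).2⟩

theorem isHomogSubmoduleOf_map_toSpanSingleton (hV : IsModuleGrading ℛ 𝒱)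
    (hI : IsHomogSubmoduleOf ℛ I) (hx : x ∈ 𝒱 a) :
    IsHomogSubmoduleOf 𝒱 (Submodule.map (LinearMap.toSpanSingleton R V x) I) := by
  refine le_antisymm ?_ (iSup_le fun g => inf_le_left)
  rw [map_toAddSubgroup, AddSubgroup.map_le_iff_le_comap]
  exact hI.le.trans <| iSup_le fun g r hr =>
    AddSubgroup.mem_iSup_of_mem (g * a) ⟨⟨r, hr.1, rfl⟩, hV.2 g a r hr.2 x hx⟩

theorem exists_mem_inf_smul_eq (hV : IsModuleGrading ℛ 𝒱) (hI : IsHomogSubmoduleOf ℛ I)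
    (hu : u ∈ 𝒱 a) {r : R} (hr : r ∈ I) (hru : r • u ∈ 𝒱 g) :
    ∃ t ∈ I.toAddSubgroup ⊓ ℛ (g * a⁻¹), t • u = r • u := by
  obtain ⟨c, rfl⟩ :
      r ∈ (DirectSum.coeAddMonoidHom fun g => I.toAddSubgroup ⊓ ℛ g).range := by
    rwa [range_coeAddMonoidHom_addSubgroup, ← hI]
  refine ⟨c (g * a⁻¹), (c _).2, ?_⟩
  refine (hV.mono fun g => inf_le_right).apply_smul_eq_of_coeAddMonoidHom_smul_mem c hu ?_
  rwa [inv_mul_cancel_right]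

end IsModuleGrading

namespace IsGradedSimpleModule

theorem forall_smul_eq_zero_or_surjective (hsimple : IsGradedSimpleModule (R := R) 𝒱)
    (hV : IsModuleGrading ℛ 𝒱) (hI : IsHomogSubmoduleOf ℛ I) (hu : u ∈ 𝒱 a) :
    (∀ r ∈ I, r • u = 0) ∨
      Function.Surjective ((LinearMap.toSpanSingleton R V u).domRestrict I) := by
  refine (hsimple.2 _ (hV.isHomogSubmoduleOf_map_toSpanSingleton hI hu)).imp (fun h r hr => ?_)
    fun h => ?_
  · exact (Submodule.eq_bot_iff _).1 h _ (mem_map_of_mem hr)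
  · rw [← LinearMap.range_eq_top, LinearMap.range_domRestrict, h]

theorem exists_mem_endModGrading_apply_smul_eq (hsimple : IsGradedSimpleModule (R := R) 𝒱)
    (hV : IsModuleGrading ℛ 𝒱) (hI : IsHomogSubmoduleOf ℛ I) (hu : u ∈ 𝒱 a) (hx : x ∈ 𝒱 b)
    (hux : ∀ r ∈ I, r • u = 0 → r • x = 0) :
    ∃ φ ∈ endModGrading (R := R) 𝒱 (a⁻¹ * b), ∀ r ∈ I, φ (r • u) = r • x := by
  obtain hIu | hsurj := hsimple.forall_smul_eq_zero_or_surjective hV hI hu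
  · exact ⟨0, zero_mem _, fun r hr => (hux r hr (hIu r hr)).symm⟩
  obtain ⟨φ, hφ⟩ := exists_comp_eq_of_surjective_of_ker_le_ker
    (g := (LinearMap.toSpanSingleton R V x).domRestrict I) hsurj fun r hr => hux r r.2 hr
  have apply_smul (r : R) (hr : r ∈ I) : φ (r • u) = r • x := LinearMap.congr_fun hφ ⟨r, hr⟩
  refine ⟨φ, fun g y hy => ?_, apply_smul⟩
  obtain ⟨⟨r, hr⟩, rfl : r • u = y⟩ := hsurj y
  obtain ⟨t, ⟨htI, htg⟩, htu⟩ := hV.exists_mem_inf_smul_eq hI hu hr hy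
  rw [← htu, apply_smul t htI, ← mul_assoc]
  exact hV.2 _ b t htg x hx

theorem mem_span_of_forall_mem_leftAnnihilator (hsimple : IsGradedSimpleModule (R := R) 𝒱)
    (hV : IsModuleGrading ℛ 𝒱) (hR : ⨆ g, ℛ g = ⊤) (hfin : S.Finite)
    (hS : ∀ u ∈ S, SetLike.IsHomogeneousElem 𝒱 u) (hx : x ∈ 𝒱 b)
    (hann : ∀ r ∈ leftAnnihilator R S, r • x = 0) : x ∈ span (endModGrSubring R 𝒱) S := by
  induction S, hfin using Set.Finite.induction_on generalizing x with
  | empty =>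
    rw [← one_smul R x, hann 1 (leftAnnihilator_empty (R := R) (V := V) ▸ mem_top)]
    exact zero_mem _
  | @insert u S _ _ ih =>
    obtain ⟨⟨a, hu⟩, hS⟩ := Set.forall_mem_insert.1 hS
    obtain ⟨φ, hφ, hφu⟩ := hsimple.exists_mem_endModGrading_apply_smul_eq hV
      (hV.isHomogSubmoduleOf_leftAnnihilator hR hS) hu hx
      fun r hr hru => hann r (mem_leftAnnihilator_insert.2 ⟨hru, hr⟩)
    have hφu_mem : φ u ∈ 𝒱 b := by simpa only [mul_inv_cancel_left] using hφ a u hu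
    have hsub : x - φ u ∈ span (endModGrSubring R 𝒱) S :=
      ih hS (sub_mem hx hφu_mem) fun r hr => by rw [smul_sub, ← map_smul, hφu r hr, sub_self]
    exact mem_span_insert.2
      ⟨⟨φ, mem_endModGrSubring_of_mem_endModGrading hφ⟩, _, hsub, (add_sub_cancel _ _).symm⟩

theorem exists_mem_leftAnnihilator_smul_eq (hsimple : IsGradedSimpleModule (R := R) 𝒱)
    (hV : IsModuleGrading ℛ 𝒱) (hR : ⨆ g, ℛ g = ⊤) (hfin : S.Finite)
    (hS : ∀ u ∈ S, SetLike.IsHomogeneousElem 𝒱 u) (hx : SetLike.IsHomogeneousElem 𝒱 x)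
    (hspan : x ∉ span (endModGrSubring R 𝒱) S) (y : V) :
    ∃ r ∈ leftAnnihilator R S, r • x = y := by
  obtain ⟨b, hx⟩ := hx
  obtain hann | hsurj := hsimple.forall_smul_eq_zero_or_surjective hV
    (hV.isHomogSubmoduleOf_leftAnnihilator hR hS) hx
  · exact absurd (hsimple.mem_span_of_forall_mem_leftAnnihilator hV hR hfin hS hx hann) hspan
  · obtain ⟨⟨r, hr⟩, hrx⟩ := hsurj y
    exact ⟨r, hr, hrx⟩

end IsGradedSimpleModule

theorem graded_jacobson_density_general (hR : ⨆ g, ℛ g = ⊤) (hV : IsModuleGrading ℛ 𝒱)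
    (hsimple : IsGradedSimpleModule (R := R) 𝒱) {ι : Type*} {v : ι → V}
    (hv : ∀ i, SetLike.IsHomogeneousElem 𝒱 (v i))
    (hindep : LinearIndependent (endModGrSubring R 𝒱) v) (s : Finset ι) (w : ι → V) :
    ∃ r : R, ∀ i ∈ s, r • v i = w i := by
  classical
  have : Nontrivial V :=
    let ⟨_, _, hrv⟩ := hsimple.1
    nontrivial_of_ne _ _ hrv
  refine exists_smul_eq_of_forall_exists_mem_leftAnnihilator fun i _ => ?_
  refine hsimple.exists_mem_leftAnnihilator_smul_eq hV hR ((s.erase i).finite_toSet.image v)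
    (Set.forall_mem_image.2 fun j _ => hv j) (hv i) ?_ (w i)
  exact hindep.notMem_span_image (Finset.notMem_erase i s)

end GradedModule

/-- **Graded Jacobson density theorem.**  Let `V` be a graded simple left module over the
`G`-graded associative ring `R` and `D = End_R^gr(V)`.  If `v 1, …, v n` are homogeneous elements
of `V` linearly independent over `D`, then for any `w 1, …, w n` there is `r ∈ R` with
`r • v i = w i` for all `i`. -/
theorem graded_jacobson_density
    {G : Type*} [Group G] [DecidableEq G]
    {R : Type*} [Ring R] {V : Type*} [AddCommGroup V] [Module R V]
    (ℛ : G → AddSubgroup R) (𝒱 : G → AddSubgroup V)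
    (hR : IsRingGrading ℛ) (hV : IsModuleGrading ℛ 𝒱)
    (hsimple : IsGradedSimpleModule (R := R) 𝒱)
    {n : ℕ} (v : Fin n → V)
    (hhomog : ∀ i, ∃ g : G, v i ∈ 𝒱 g)
    (hindep : ∀ d : Fin n → Module.End R V, (∀ i, d i ∈ endModGr (R := R) 𝒱) →
        ∑ i, d i (v i) = 0 → ∀ i, d i = 0) :
    ∀ w : Fin n → V, ∃ r : R, ∀ i, r • v i = w i := by
  intro w
  obtain ⟨r, hr⟩ := graded_jacobson_density_general hR.iSup_eq_top hV hsimple hhomog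
    (linearIndependent_endModGrSubring_iff.2 hindep) Finset.univ w
  exact ⟨r, fun i => hr i (Finset.mem_univ i)⟩
end
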